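/- arXiv:2212.14265 — 4 statements merged into one kernel-verified Lean document; each statement's English description precedes it below -/
import Mathlib

section
/- For every n ≥ 5, the set of tuples (t₁,…,tₙ) ∈ ℝⁿ with the property that, setting p_i = (t_i, t_i², t_i³, t_i⁴) ∈ ℝ⁴, for every 2-triangulation T of the n-gon the rows of the bar-and-joint rigidity matrix R(p₁,…,pₙ) indexed by T are linearly independent, is open and dense in ℝⁿ. (Since every 2-triangulation has 4n−10 elements, which equals the rank of R(p), such rows then form a basis of the row space; i.e., 2-triangulations are isostatic for generic positions along the moment curve in dimension 4.) -/
open scoped BigOperators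

/-- A pair `{i,j}` of distinct vertices of the `n`-gon.  Vertices `1,…,n` are represented by
`Fin n` (vertex `i` corresponds to `i-1 : Fin n`), and a pair is recorded with its endpoints
in increasing order. -/
abbrev Pair (n : ℕ) := {p : Fin n × Fin n // p.1 < p.2}

/-- Two pairs `{i,j}` (`i<j`) and `{k,l}` (`k<l`) cross if `i<k<j<l` or `k<i<l<j`. -/
def Cross {n : ℕ} (e f : Pair n) : Prop :=
  (e.val.1 < f.val.1 ∧ f.val.1 < e.val.2 ∧ e.val.2 < f.val.2) ∨
  (f.val.1 < e.val.1 ∧ e.val.1 < f.val.2 ∧ f.val.2 < e.val.2)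

/-- A set of pairs is `(k+1)`-crossing-free if it contains no `k+1` pairwise crossing pairs. -/
def CrossingFree (n k : ℕ) (S : Set (Pair n)) : Prop :=
  ¬ ∃ C : Finset (Pair n), ↑C ⊆ S ∧ C.card = k + 1 ∧
      ∀ e ∈ C, ∀ f ∈ C, e ≠ f → Cross e f

/-- A `k`-triangulation of the `n`-gon: an inclusion-maximal `(k+1)`-crossing-free set. -/
def IsTriangulation (n k : ℕ) (T : Set (Pair n)) : Prop :=
  CrossingFree n k T ∧ ∀ S : Set (Pair n), CrossingFree n k S → T ⊆ S → S = T

/-- The length of a pair `{i,j}` with respect to the `N`-gon: `min (j-i) (N-(j-i))`. -/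
def pairLen (N : ℕ) {n : ℕ} (e : Pair n) : ℕ :=
  min ((e.val.2 : ℕ) - (e.val.1 : ℕ)) (N - ((e.val.2 : ℕ) - (e.val.1 : ℕ)))

/-- A pair is `k`-relevant in the `N`-gon if its length is at least `k+1`. -/
def Relevant (N k : ℕ) {n : ℕ} (e : Pair n) : Prop := k + 1 ≤ pairLen N e

/-- The 2×2 determinant `det (u v)` of two plane vectors. -/
def det2 (u v : ℝ × ℝ) : ℝ := u.1 * v.2 - u.2 * v.1

/-- Points in convex position, listed in counterclockwise order along their convex hull:
they are distinct and every triple `i<j<k` is positively oriented. -/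
def ConvexPosition {n : ℕ} (q : Fin n → ℝ × ℝ) : Prop :=
  Function.Injective q ∧
  ∀ i j k : Fin n, i < j → j < k → 0 < det2 (q j - q i) (q k - q i)

/-- `p` lies on the line through `a` and `b`. -/
def onLine (a b p : ℝ × ℝ) : Prop := det2 (b - a) (p - a) = 0

/-- Row of the bar-and-joint rigidity matrix `R(p)` indexed by the pair `e`:
`p_i - p_j` in block `i`, `p_j - p_i` in block `j`, zeros elsewhere. -/
def bjRow {n d : ℕ} (p : Fin n → Fin d → ℝ) (e : Pair n) : Fin n × Fin d → ℝ :=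
  fun ma =>
    if ma.1 = e.val.1 then p e.val.1 ma.2 - p e.val.2 ma.2
    else if ma.1 = e.val.2 then p e.val.2 ma.2 - p e.val.1 ma.2
    else 0

/-- Row of the hyperconnectivity matrix `H(p)` indexed by the pair `e`:
`p_j` in block `i`, `-p_i` in block `j`, zeros elsewhere. -/
def hypRow {n d : ℕ} (p : Fin n → Fin d → ℝ) (e : Pair n) : Fin n × Fin d → ℝ :=
  fun ma =>
    if ma.1 = e.val.1 then p e.val.2 ma.2
    else if ma.1 = e.val.2 then - p e.val.1 ma.2
    else 0

/-- The vector `c_{ij} = ((x_i-x_j)^{d-1}, (x_i-x_j)^{d-2}(y_i-y_j), …, (y_i-y_j)^{d-1})`. -/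
def cvec (d : ℕ) (qi qj : ℝ × ℝ) : Fin d → ℝ :=
  fun a => (qi.1 - qj.1) ^ (d - 1 - (a : ℕ)) * (qi.2 - qj.2) ^ (a : ℕ)

/-- Row of the cofactor rigidity matrix `C_d(q)` indexed by the pair `e`:
`c_{ij}` in block `i`, `-c_{ij}` in block `j`, zeros elsewhere. -/
def cofRow (d : ℕ) {n : ℕ} (q : Fin n → ℝ × ℝ) (e : Pair n) : Fin n × Fin d → ℝ :=
  fun ma =>
    if ma.1 = e.val.1 then cvec d (q e.val.1) (q e.val.2) ma.2
    else if ma.1 = e.val.2 then - cvec d (q e.val.1) (q e.val.2) ma.2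
    else 0

/-- `x_{ij} = X_i Z_j - Z_i X_j` for vectors in `ℝ³`. -/
def xQ (Qi Qj : ℝ × ℝ × ℝ) : ℝ := Qi.1 * Qj.2.2 - Qi.2.2 * Qj.1

/-- `y_{ij} = Y_i Z_j - Z_i Y_j` for vectors in `ℝ³`. -/
def yQ (Qi Qj : ℝ × ℝ × ℝ) : ℝ := Qi.2.1 * Qj.2.2 - Qi.2.2 * Qj.2.1

/-- The vector `c_{ij} = (x_{ij}^{d-1}, x_{ij}^{d-2} y_{ij}, …, y_{ij}^{d-1})`. -/
def gcvec (d : ℕ) (Qi Qj : ℝ × ℝ × ℝ) : Fin d → ℝ :=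
  fun a => (xQ Qi Qj) ^ (d - 1 - (a : ℕ)) * (yQ Qi Qj) ^ (a : ℕ)

/-- Row of the generalized cofactor rigidity matrix `C_d(Q)` for vectors in `ℝ³`. -/
def gcofRow (d : ℕ) {n : ℕ} (Q : Fin n → ℝ × ℝ × ℝ) (e : Pair n) : Fin n × Fin d → ℝ :=
  fun ma =>
    if ma.1 = e.val.1 then gcvec d (Q e.val.1) (Q e.val.2) ma.2
    else if ma.1 = e.val.2 then - gcvec d (Q e.val.1) (Q e.val.2) ma.2
    else 0

/-- The cone of all nonnegative linear combinations of `{v e : e ∈ S}`. -/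
def coneOf {n : ℕ} {V : Type*} [AddCommGroup V] [Module ℝ V]
    (v : Pair n → V) (S : Set (Pair n)) : Set V :=
  {x | ∃ c : Pair n → ℝ, (∀ e, 0 ≤ c e) ∧ (∀ e, c e ≠ 0 → e ∈ S) ∧ x = ∑ e, c e • v e}

/-- The vectors `(v e)` realize the `k`-associahedron of the `n`-gon as a complete
simplicial fan: (a) the vectors of every `k`-triangulation are linearly independent;
(b) cones of two `k`-triangulations intersect in the cone of their intersection;
(c) the union of all the cones is the linear span of all the vectors. -/
def RealizesFan (n k : ℕ) {V : Type*} [AddCommGroup V] [Module ℝ V]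
    (v : Pair n → V) : Prop :=
  (∀ T : Set (Pair n), IsTriangulation n k T →
      LinearIndependent ℝ (fun e : T => v e.val)) ∧
  (∀ T T' : Set (Pair n), IsTriangulation n k T → IsTriangulation n k T' →
      coneOf v T ∩ coneOf v T' = coneOf v (T ∩ T')) ∧
  (⋃ T ∈ {T : Set (Pair n) | IsTriangulation n k T}, coneOf v T) =
    (Submodule.span ℝ (Set.range v) : Set V)

/-- The set of parameter tuples `t` along the moment curve in `ℝ⁴` for which every
2-triangulation of the `n`-gon indexes linearly independent rows of the bar-and-joint rigidity
matrix. -/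
def goodSet (n : ℕ) : Set (Fin n → ℝ) :=
  {t | ∀ T : Set (Pair n), IsTriangulation n 2 T →
    LinearIndependent ℝ
      (fun e : T => bjRow (fun i (a : Fin 4) => t i ^ ((a : ℕ) + 1)) e.val)}

theorem comb (n : ℕ) (G : Fin (n+1) → Fin (n+1) → Prop) [DecidableRel G] (hn : 1 ≤ n)
  (hs : ∀ a b, G a b → G b a) (hi : ∀ a, ¬ G a a)
  (hc : ∀ a b c d e f, a < b → b < c → c < d → d < e → e < f → G a d → G b e → G c f → False) :
  ∃ i : Fin n, (Finset.univ.filter (fun x => G i.castSucc x ∧ G i.succ x)).card ≤ 3 := by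
  by_contra! hh
  have key : ∀ i : Fin n, ∀ s : Finset (Fin (n+1)), s.card ≤ 3 → ∃ x, x ∉ s ∧ G i.castSucc x ∧ G i.succ x := by
    intro i s h
    obtain ⟨x, hx, hx'⟩ := Finset.exists_mem_notMem_of_card_lt_card (lt_of_le_of_lt h (hh i))
    simp at hx
    exact ⟨x, hx', hx⟩
  have desc : ∀ d : ℕ, ∀ i x : Fin (n+1), (x : ℕ) = i + d → 3 ≤ d → G i x → False := by
    intro d
    induction d using Nat.strong_induction_on with
    | _ d ih =>
      intro i x hx hd hG
      have hxl := x.2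
      let j : Fin n := ⟨i + 1, by omega⟩
      let v3 : Fin (n+1) := ⟨i + 3, by omega⟩
      obtain ⟨y, hy, hy1, hy2⟩ := key j {i, v3} (le_trans Finset.card_le_two (by norm_num))
      obtain ⟨z, hz, hz1, hz2⟩ := key j {i, v3, y} Finset.card_le_three
      simp only [Finset.mem_insert, Finset.mem_singleton, not_or] at hy hz
      have ney : ∀ y, G j.castSucc y → G j.succ y → (y : ℕ) ≠ i + 1 ∧ (y : ℕ) ≠ i + 2 := by
        intro y h1 h2
        constructor
        · intro h
          have : y = j.castSucc := by ext; simp [j, h]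
          subst this; exact hi _ h1
        · intro h
          have : y = j.succ := by ext; simp [j, h]
          subst this; exact hi _ h2
      have outside : ∀ y, y ≠ i → y ≠ v3 → G j.castSucc y → G j.succ y → y < i ∨ x < y := by
        intro y h1 h2 h3 h4
        have h5 := ney y h3 h4
        by_contra! h
        have h6 : (y : ℕ) ≠ i := fun h => h1 (Fin.ext h)
        have h7 : (y : ℕ) ≠ i + 3 := fun h => h2 (Fin.ext h)
        have h8 : (i : ℕ) ≤ y := h.1
        have h9 : (y : ℕ) ≤ x := h.2
        exact ih (y - (i + 1)) (by omega) j.castSucc y (by simp [j]; omega) (by omega) h3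
      have hij : i < j.castSucc := by rw [Fin.lt_def]; simp [j]
      have hjj : j.castSucc < j.succ := by rw [Fin.lt_def]; simp [j]
      have hjx : j.succ < x := by rw [Fin.lt_def]; simp [j]; omega
      have main : ∀ y z, (y < i ∨ x < y) → (z < i ∨ x < z) → y < z → G j.castSucc y → G j.succ y →
          G j.castSucc z → G j.succ z → False := by
        intro y z h1 h2 h3 a1 a2 b1 b2
        rcases h1 with h1 | h1
        · rcases h2 with h2 | h2
          · exact hc y z i j.castSucc j.succ x h3 h2 hij hjj hjx (hs _ _ a1) (hs _ _ b2) hG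
          · exact hc y i j.castSucc j.succ x z h1 hij hjj hjx h2 (hs _ _ a2) hG b1
        · exact hc i j.castSucc j.succ x y z hij hjj hjx h1 h3 hG a1 b2
      have oy := outside y hy.1 hy.2 hy1 hy2
      have oz := outside z hz.1 hz.2.1 hz1 hz2
      rcases lt_or_gt_of_ne hz.2.2 with h | h
      · exact main z y oz oy h hz1 hz2 hy1 hy2
      · exact main y z oy oz h hy1 hy2 hz1 hz2
  let i0 : Fin n := ⟨0, hn⟩
  obtain ⟨x, hx, h1, h2⟩ := key i0 (Finset.univ.filter (fun x => (x : ℕ) < 3)) (by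
    have : (Finset.univ.filter (fun x : Fin (n+1) => (x : ℕ) < 3)).card ≤ (Finset.range 3).card :=
      Finset.card_le_card_of_injOn (fun x => (x : ℕ)) (by intro x hx; simpa using hx) (by intro x _ y _ h; exact Fin.ext h)
    simpa using this)
  simp only [Finset.mem_filter, Finset.mem_univ, true_and, not_lt] at hx
  exact desc x i0.castSucc x (by simp [i0]) (by omega) h1

theorem poly_LI {S W : Type*} [Fintype S] [Fintype W] (M : S → W → Polynomial ℝ) (s0 : ℝ)
    (h : LinearIndependent ℝ (fun e w => (M e w).eval s0)) :
    {s | ¬ LinearIndependent ℝ (fun e w => (M e w).eval s)}.Finite := by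
  classical
  let A : ℝ → Matrix S W ℝ := fun s => Matrix.of (fun e w => (M e w).eval s)
  have hinj : Function.Injective (fun v => Matrix.vecMul v (A s0)) :=
    Matrix.vecMul_injective_iff.2 h
  obtain ⟨g, hg⟩ := LinearMap.exists_leftInverse_of_injective (Matrix.vecMulLinear (A s0))
    (LinearMap.ker_eq_bot.2 hinj)
  let N : Matrix W S ℝ := Matrix.of (fun w e => g (Pi.single w 1) e)
  have hN : A s0 * N = 1 := by
    ext e e'
    have h1 : g (A s0 e) = Pi.single e 1 := by
      have := LinearMap.congr_fun hg (Pi.single e 1)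
      simpa [Matrix.row] using this
    have h2 : A s0 e = ∑ w, A s0 e w • (Pi.single w (1 : ℝ) : W → ℝ) := by
      ext w; simp [Finset.sum_apply, Pi.single_apply]
    rw [h2, map_sum] at h1
    have h3 := congr_fun h1 e'
    simp only [map_smul, Finset.sum_apply, Pi.smul_apply, smul_eq_mul] at h3
    rw [Matrix.mul_apply]
    simp only [N, Matrix.of_apply, h3, Matrix.one_apply, Pi.single_apply, eq_comm]
  let P : Polynomial ℝ := (Matrix.of M * N.map Polynomial.C).det
  have hP : ∀ s, P.eval s = (A s * N).det := by
    intro s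
    have : P.eval s = Polynomial.evalRingHom s P := rfl
    rw [this, RingHom.map_det, RingHom.mapMatrix_apply, Matrix.map_mul]
    congr 2
    ext w e
    simp [N]
  have hP0 : P ≠ 0 := by
    intro h0
    have := hP s0
    rw [hN, h0] at this
    simp at this
  refine (Polynomial.finite_setOfPred_isRoot hP0).subset ?_
  intro s hs
  by_contra hr
  apply hs
  have hdet : (A s * N).det ≠ 0 := by rw [← hP]; exact hr
  have hu : IsUnit (A s * N) := (Matrix.isUnit_iff_isUnit_det _).2 (isUnit_iff_ne_zero.2 hdet)
  have hi := Matrix.vecMul_injective_iff_isUnit.2 hu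
  apply Matrix.vecMul_injective_iff.1
  intro v v' hv
  apply hi
  have hv' : Matrix.vecMul v (A s) = Matrix.vecMul v' (A s) := hv
  simp only [← Matrix.vecMul_vecMul, hv']

theorem vander {ι : Type*} (B : Finset ι) (hB : B.card ≤ 3) (x : ι → ℝ) (u : ℝ)
    (hx : ∀ b ∈ B, ∀ b' ∈ B, x b = x b' → b = b') (hu : ∀ b ∈ B, x b ≠ u) (c0 : ℝ) (c : ι → ℝ)
    (h : ∀ a : Fin 4, c0 * (((a : ℕ) + 1 : ℝ) * u ^ (a : ℕ)) +
      ∑ b ∈ B, c b * (u ^ ((a : ℕ) + 1) - x b ^ ((a : ℕ) + 1)) = 0) :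
    c0 = 0 ∧ ∀ b ∈ B, c b = 0 := by
  classical
  have key : ∀ q : Polynomial ℝ, q.natDegree < 5 →
      c0 * q.derivative.eval u + ∑ b ∈ B, c b * (q.eval u - q.eval (x b)) = 0 := by
    intro q hq
    let L : Polynomial ℝ →ₗ[ℝ] ℝ := c0 • (Polynomial.leval u ∘ₗ Polynomial.derivative) +
      ∑ b ∈ B, c b • (Polynomial.leval u - Polynomial.leval (x b))
    have hL : ∀ q, L q = c0 * q.derivative.eval u + ∑ b ∈ B, c b * (q.eval u - q.eval (x b)) := by
      intro q
      simp [L, LinearMap.sum_apply, Polynomial.leval]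
    rw [← hL, q.as_sum_range_C_mul_X_pow' hq, map_sum]
    apply Finset.sum_eq_zero
    intro j hj
    rw [← Polynomial.smul_eq_C_mul, map_smul, hL]
    rcases j with _ | j
    · simp
    · have := h ⟨j, by simp at hj; omega⟩
      simp only [Polynomial.derivative_X_pow, Polynomial.eval_mul, Polynomial.eval_pow,
        Polynomial.eval_X, Polynomial.eval_C, Nat.add_sub_cancel, Nat.cast_add, Nat.cast_one] at *
      simp at this ⊢
      right; exact this
  have deg : ∀ B' : Finset ι, B' ⊆ B →
      ((Polynomial.X - Polynomial.C u) * ∏ b ∈ B', (Polynomial.X - Polynomial.C (x b))).natDegree < 5 := by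
    intro B' hB'
    refine lt_of_le_of_lt Polynomial.natDegree_mul_le ?_
    rw [Polynomial.natDegree_X_sub_C, Polynomial.natDegree_prod_of_monic _ _ (fun b _ => Polynomial.monic_X_sub_C _)]
    simp only [Polynomial.natDegree_X_sub_C]
    have := Finset.card_le_card hB'
    simp; omega
  have h0 : c0 = 0 := by
    have := key _ (deg B subset_rfl)
    have hz : ∑ b ∈ B, c b * (((Polynomial.X - Polynomial.C u) * ∏ b ∈ B, (Polynomial.X - Polynomial.C (x b))).eval u - ((Polynomial.X - Polynomial.C u) * ∏ b ∈ B, (Polynomial.X - Polynomial.C (x b))).eval (x b)) = 0 := by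
      apply Finset.sum_eq_zero
      intro b hb
      have : ∏ b' ∈ B, (x b - x b') = 0 := Finset.prod_eq_zero hb (sub_self _)
      simp [Polynomial.eval_prod, this]
    rw [hz] at this
    simp [Polynomial.eval_prod] at this
    rcases this with h | h
    · exact h
    · obtain ⟨b, hb, hb'⟩ := Finset.prod_eq_zero_iff.1 h
      exact absurd (sub_eq_zero.1 hb').symm (hu b hb)
  refine ⟨h0, fun b hb => ?_⟩
  have := key _ (deg (B.erase b) (Finset.erase_subset _ _))
  rw [h0, zero_mul, zero_add, Finset.sum_eq_single b] at this
  · simp [Polynomial.eval_prod] at this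
    rcases this with h | h | h
    · exact h
    · exact absurd (sub_eq_zero.1 h) (hu b hb)
    · obtain ⟨b', hb', h⟩ := Finset.prod_eq_zero_iff.1 h
      rw [Finset.mem_erase] at hb'
      exact absurd (hx b hb b' hb'.2 (sub_eq_zero.1 h)).symm hb'.1
  · intro b' hb' hne
    have : ∏ b'' ∈ B.erase b, (x b' - x b'') = 0 :=
      Finset.prod_eq_zero (Finset.mem_erase.2 ⟨hne, hb'⟩) (sub_self _)
    simp [Polynomial.eval_prod, this]
  · exact fun h => absurd hb h

def GAdj {n : ℕ} (S : Set (Pair n)) (a b : Fin n) : Prop :=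
  (∃ h : a < b, (⟨(a, b), h⟩ : Pair n) ∈ S) ∨ (∃ h : b < a, (⟨(b, a), h⟩ : Pair n) ∈ S)

theorem GAdj.symm {n : ℕ} {S : Set (Pair n)} {a b : Fin n} (h : GAdj S a b) : GAdj S b a := Or.symm h

theorem GAdj.irrefl {n : ℕ} {S : Set (Pair n)} {a : Fin n} : ¬ GAdj S a a := by
  rintro (⟨h, _⟩ | ⟨h, _⟩) <;> exact lt_irrefl _ h

def grow {n d : ℕ} (D : Fin n → Fin n → Fin d → ℝ) (e : Pair n) : Fin n × Fin d → ℝ :=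
  fun ma =>
    if ma.1 = e.val.1 then D e.val.1 e.val.2 ma.2
    else if ma.1 = e.val.2 then D e.val.2 e.val.1 ma.2
    else 0

def SF {n d : ℕ} (S : Set (Pair n)) (D : Fin n → Fin n → Fin d → ℝ) : Prop :=
  ∀ w : Fin n → Fin n → ℝ, (∀ a b, w a b = w b a) → (∀ a b, ¬ GAdj S a b → w a b = 0) →
    (∀ m a, ∑ b, w m b * D m b a = 0) → ∀ a b, w a b = 0

theorem grow_sum {n d : ℕ} (D : Fin n → Fin n → Fin d → ℝ) (w : Fin n → Fin n → ℝ)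
    (hs : ∀ a b, w a b = w b a) (hd : ∀ a, w a a = 0) (m : Fin n) (a : Fin d) :
    ∑ e : Pair n, w e.val.1 e.val.2 * grow D e (m, a) = ∑ b, w m b * D m b a := by
  have h1 := Finset.sum_subtype (F := inferInstance) (Finset.univ.filter (fun p : Fin n × Fin n => p.1 < p.2))
    (p := fun p : Fin n × Fin n => p.1 < p.2) (by simp)
    (fun p => w p.1 p.2 * (if m = p.1 then D p.1 p.2 a else if m = p.2 then D p.2 p.1 a else 0))
  have h2 : ∑ e : Pair n, w e.val.1 e.val.2 * grow D e (m, a) =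
    ∑ x, ∑ y, ((if m = x then (if x < y then w x y * D x y a else 0) else 0) +
      (if m = y then (if x < y then w x y * D y x a else 0) else 0)) := by
    rw [← Fintype.sum_prod_type']
    refine h1.symm.trans ?_
    rw [Finset.sum_filter]
    apply Finset.sum_congr rfl
    rintro ⟨x, y⟩ _
    dsimp only
    by_cases hxy : x < y
    · by_cases hx : m = x
      · subst hx
        simp [hxy, hxy.ne]
      · simp [hxy, hx]
    · simp [hxy]
  rw [h2]
  simp only [Finset.sum_add_distrib]
  rw [Finset.sum_comm]
  simp only [Finset.sum_ite_eq, Finset.mem_univ, if_true]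
  rw [← Finset.sum_add_distrib]
  apply Finset.sum_congr rfl
  intro b _
  rcases lt_trichotomy m b with h | h | h
  · simp [h, h.not_gt]
  · subst h; simp [hd]
  · simp [h, h.not_gt, hs b m]

theorem LI_iff_SF {n d : ℕ} (S : Set (Pair n)) (D : Fin n → Fin n → Fin d → ℝ) :
    LinearIndependent ℝ (fun e : S => grow D e.val) ↔ SF S D := by
  classical
  rw [Fintype.linearIndependent_iff]
  have ext0 : ∀ c : Pair n → ℝ, (∀ e ∉ S, c e = 0) →
      ∑ e : S, c e.val • grow D e.val = ∑ e, c e • grow D e := by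
    intro c hc
    have := Finset.sum_subtype (F := inferInstance) (Finset.univ.filter (fun e : Pair n => e ∈ S)) (p := fun e => e ∈ S) (by simp)
      (fun e => c e • grow D e)
    refine this.symm.trans ?_
    rw [Finset.sum_filter]
    apply Finset.sum_congr rfl
    intro e _
    split_ifs with h
    · rfl
    · rw [hc e h, zero_smul]
  constructor
  · intro h w hs h0 heq
    have hd : ∀ a, w a a = 0 := fun a => h0 a a GAdj.irrefl
    have hz : ∀ e ∉ S, w e.val.1 e.val.2 = 0 := by
      intro e he
      apply h0
      rintro (⟨_, h'⟩ | ⟨h', _⟩)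
      · exact he h'
      · exact lt_asymm h' e.2
    have := h (fun e => w e.val.val.1 e.val.val.2) (by
      rw [ext0 (fun e => w e.val.1 e.val.2) hz]
      ext ⟨m, a⟩
      rw [Finset.sum_apply]
      simp only [Pi.smul_apply, smul_eq_mul, Pi.zero_apply]
      rw [grow_sum D w hs hd, heq])
    have hlt : ∀ a b, a < b → w a b = 0 := by
      intro a b hab
      by_cases he : (⟨(a, b), hab⟩ : Pair n) ∈ S
      · exact this ⟨_, he⟩
      · exact hz _ he
    intro a b
    rcases lt_trichotomy a b with h | h | h
    · exact hlt _ _ h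
    · subst h; exact hd _
    · rw [hs]; exact hlt _ _ h
  · intro h g hg e
    let c : Pair n → ℝ := fun e => if h : e ∈ S then g ⟨e, h⟩ else 0
    have hc : ∀ e : S, c e.val = g e := fun e => by simp [c]
    have hc0 : ∀ e ∉ S, c e = 0 := fun e he => by simp [c, he]
    let w : Fin n → Fin n → ℝ := fun a b => if h : a < b then c ⟨(a, b), h⟩ else
      if h : b < a then c ⟨(b, a), h⟩ else 0
    have hwc : ∀ e : Pair n, w e.val.1 e.val.2 = c e := by
      intro e; simp only [w]; rw [dif_pos e.2]
    have hs : ∀ a b, w a b = w b a := by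
      intro a b
      simp only [w]
      rcases lt_trichotomy a b with h | h | h
      · simp [h, h.not_gt]
      · subst h; rfl
      · simp [h, h.not_gt]
    have hd : ∀ a, w a a = 0 := fun a => by simp [w]
    rw [← hc, ← hwc]
    refine h w hs ?_ ?_ _ _
    · intro a b hab
      simp only [w]
      split_ifs with h1 h2
      · exact hc0 _ fun h => hab (Or.inl ⟨h1, h⟩)
      · exact hc0 _ fun h => hab (Or.inr ⟨h2, h⟩)
      · rfl
    · intro m a
      rw [← grow_sum D w hs hd]
      simp only [hwc]
      have h3 := congr_fun ((ext0 c hc0).symm.trans (by simpa only [hc] using hg)) (m, a)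
      simpa [Finset.sum_apply] using h3

def contr {n : ℕ} (S : Set (Pair (n+1))) (i : Fin n) : Set (Pair n) :=
  {e | ∃ x y, GAdj S x y ∧ i.predAbove x = e.val.1 ∧ i.predAbove y = e.val.2}

theorem GAdj_contr {n : ℕ} (S : Set (Pair (n+1))) (i : Fin n) {x y : Fin (n+1)} (h : GAdj S x y)
    (hne : i.predAbove x ≠ i.predAbove y) : GAdj (contr S i) (i.predAbove x) (i.predAbove y) := by
  rcases lt_or_gt_of_ne hne with hl | hl
  · exact Or.inl ⟨hl, x, y, h, rfl, rfl⟩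
  · exact Or.inr ⟨hl, y, x, h.symm, rfl, rfl⟩

/-- limit directions -/
theorem limit_SF {n : ℕ} (S : Set (Pair (n+1))) (i : Fin n) (t : Fin n → ℝ)
    (ht : Function.Injective t)
    (hcard : ∀ B : Finset (Fin (n+1)), (∀ x ∈ B, GAdj S i.castSucc x ∧ GAdj S i.succ x) → B.card ≤ 3)
    (hSF : SF (contr S i) (fun x y (a : Fin 4) => t x ^ ((a : ℕ) + 1) - t y ^ ((a : ℕ) + 1)))
    (D : Fin (n+1) → Fin (n+1) → Fin 4 → ℝ)
    (hD1 : ∀ a, D i.castSucc i.succ a = ((a : ℕ) + 1 : ℝ) * t i ^ (a : ℕ))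
    (hD2 : ∀ a, D i.succ i.castSucc a = - (((a : ℕ) + 1 : ℝ) * t i ^ (a : ℕ)))
    (hD : ∀ x y a, ¬ (x = i.castSucc ∧ y = i.succ) → ¬ (x = i.succ ∧ y = i.castSucc) →
      D x y a = t (i.predAbove x) ^ ((a : ℕ) + 1) - t (i.predAbove y) ^ ((a : ℕ) + 1)) :
    SF S D := by
  classical
  intro w hs h0 heq
  have hd : ∀ a, w a a = 0 := fun a => h0 a a GAdj.irrefl
  set k := i.castSucc with hk
  let σ : Fin n → Fin (n+1) := k.succAbove
  have hσi : σ i = i.succ := Fin.succAbove_castSucc_self i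
  have hπσ : ∀ j, i.predAbove (σ j) = j := fun j => Fin.predAbove_succAbove i j
  have hπk : i.predAbove k = i := Fin.predAbove_castSucc_self i
  have hσk : ∀ j, σ j ≠ k := fun j => Fin.succAbove_ne _ _
  have hσinj : Function.Injective σ := Fin.succAbove_right_injective
  rw [← hσi] at hD1 hD2 hD
  let dd : Fin n → Fin n → Fin 4 → ℝ := fun x y a => t x ^ ((a : ℕ) + 1) - t y ^ ((a : ℕ) + 1)
  have Dσσ : ∀ x y a, D (σ x) (σ y) a = dd x y a := by
    intro x y a
    rw [hD _ _ _ (fun h => hσk _ h.1) (fun h => hσk _ h.2), hπσ, hπσ]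
  have Dσk : ∀ x a, x ≠ i → D (σ x) k a = dd x i a := by
    intro x a hx
    rw [hD _ _ _ (fun h => hσk _ h.1) (fun h => hx (hσinj h.1)), hπσ, hπk]
  have Dkσ : ∀ x a, x ≠ i → D k (σ x) a = dd i x a := by
    intro x a hx
    rw [hD _ _ _ (fun h => hx (hσinj h.2)) (fun h => hσk _ h.1.symm), hπσ, hπk]
  have hddself : ∀ x a, dd x x a = 0 := fun x a => sub_self _
  have eqσ : ∀ m a, w (σ m) k * D (σ m) k a + ∑ b, w (σ m) (σ b) * dd m b a = 0 := by
    intro m a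
    have := heq (σ m) a
    rw [Fin.sum_univ_succAbove _ k] at this
    rw [← this]
    congr 1
    exact Finset.sum_congr rfl fun b _ => by rw [← Dσσ]
  have eqk : ∀ a, w k (σ i) * D k (σ i) a + ∑ b, w k (σ b) * dd i b a = 0 := by
    intro a
    have := heq k a
    rw [Fin.sum_univ_succAbove _ k, hd, zero_mul, zero_add] at this
    rw [← this]
    have h2 : ∀ b, w k (k.succAbove b) * D k (k.succAbove b) a =
        (if b = i then w k (σ i) * D k (σ i) a else 0) + w k (σ b) * dd i b a := by
      intro b
      split_ifs with h
      · subst h; rw [hddself]; simp [σ]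
      · rw [zero_add, ← Dkσ b a h]
    simp only [h2, Finset.sum_add_distrib, Finset.sum_ite_eq', Finset.mem_univ, if_true]
  let w' : Fin n → Fin n → ℝ := fun a b => if a = b then 0 else
    w (σ a) (σ b) + (if a = i then w k (σ b) else 0) + (if b = i then w (σ a) k else 0)
  have hw' : ∀ a b, w' a b = 0 := by
    apply hSF
    · intro a b
      simp only [w']
      by_cases hab : a = b
      · subst hab; rfl
      · rw [if_neg hab, if_neg (Ne.symm hab), hs (σ a) (σ b), hs k (σ b), hs (σ a) k]; ring
    · intro a b hab
      simp only [w']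
      by_cases h : a = b
      · simp [h]
      · rw [if_neg h]
        have z : ∀ x y, i.predAbove x = a → i.predAbove y = b → w x y = 0 := by
          intro x y hx hy
          apply h0
          intro hG
          apply hab
          subst hx hy
          exact GAdj_contr S i hG h
        rw [z _ _ (hπσ a) (hπσ b), zero_add]
        split_ifs with h1 h2 h2
        · exact absurd (h1.trans h2.symm) h
        · rw [z _ _ (hπk.trans h1.symm) (hπσ b), zero_add]
        · rw [z _ _ (hπσ a) (hπk.trans h2.symm), zero_add]
        · simp
    · intro m a
      change ∑ b, w' m b * dd m b a = 0
      by_cases hm : m = i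
      · subst hm
        have : ∀ b, w' m b * dd m b a = w (σ m) (σ b) * dd m b a + w k (σ b) * dd m b a := by
          intro b
          by_cases hb : m = b
          · subst hb; simp [hddself]
          · simp only [w', if_neg hb, if_neg (Ne.symm hb), if_true]; ring
        simp only [this, Finset.sum_add_distrib]
        have e1 := eqσ m a
        have e2 := eqk a
        rw [hD1] at e2
        rw [hD2, hs] at e1
        linarith
      · rw [← eqσ m a, Dσk m a hm]
        have : ∀ b, w' m b * dd m b a = (if b = i then w (σ m) k * dd m i a else 0) + w (σ m) (σ b) * dd m b a := by
          intro b
          by_cases hb : m = b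
          · subst hb; simp [hddself, hm]
          · simp only [w', if_neg hb, if_neg hm]
            split_ifs with h
            · subst h; ring
            · ring
        simp only [this, Finset.sum_add_distrib, Finset.sum_ite_eq', Finset.mem_univ, if_true]
  have hkey : ∀ b, b ≠ i → w (σ i) (σ b) + w k (σ b) = 0 := by
    intro b hb
    have := hw' i b
    simpa [w', hb, Ne.symm hb] using this
  let B : Finset (Fin n) := Finset.univ.filter (fun b => b ≠ i ∧ w k (σ b) ≠ 0)
  have hB : B.card ≤ 3 := by
    rw [← Finset.card_image_of_injective B hσinj]
    apply hcard
    intro x hx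
    obtain ⟨b, hb, rfl⟩ := Finset.mem_image.1 hx
    simp only [B, Finset.mem_filter, Finset.mem_univ, true_and] at hb
    constructor
    · by_contra h; exact hb.2 (h0 _ _ h)
    · by_contra h
      have := hkey b hb.1
      rw [hσi, h0 _ _ h, zero_add] at this
      exact hb.2 this
  obtain ⟨hc0, hc⟩ := vander B hB t (t i) (fun b _ b' _ h => ht h)
    (fun b hb h => (Finset.mem_filter.1 hb).2.1 (ht h)) (w k (σ i)) (fun b => w k (σ b)) (by
      intro a
      rw [← eqk a, hD1]
      congr 1
      apply Finset.sum_subset (Finset.subset_univ _)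
      intro b _ hb
      by_cases h : b = i
      · subst h; simp
      · have : w k (σ b) = 0 := by
          by_contra h'
          exact hb (by simp [B, h, h'])
        simp [this])
  have hwk : ∀ b, w k (σ b) = 0 := by
    intro b
    by_cases h : b = i
    · rw [h, hc0]
    · by_contra h'
      exact h' (hc b (by simp [B, h, h']))
  have hwσ : ∀ a b, w (σ a) (σ b) = 0 := by
    intro a b
    by_cases h : a = b
    · subst h; exact hd _
    · have := hw' a b
      simp only [w', if_neg h, hwk, hs (σ a) k] at this
      simpa using this
  intro a b
  rcases Fin.eq_self_or_eq_succAbove k a with rfl | ⟨a, rfl⟩ <;>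
  rcases Fin.eq_self_or_eq_succAbove k b with rfl | ⟨b, rfl⟩
  · exact hd _
  · exact hwk _
  · rw [hs]; exact hwk _
  · exact hwσ _ _

theorem bj_eq_grow {n : ℕ} (t : Fin n → ℝ) (e : Pair n) :
    bjRow (fun i (a : Fin 4) => t i ^ ((a : ℕ) + 1)) e =
      grow (fun x y (a : Fin 4) => t x ^ ((a : ℕ) + 1) - t y ^ ((a : ℕ) + 1)) e := rfl

open Polynomial in
theorem step {n : ℕ} (S : Set (Pair (n+1))) (i : Fin n) (t : Fin n → ℝ)
    (ht : Function.Injective t)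
    (hcard : ∀ B : Finset (Fin (n+1)), (∀ x ∈ B, GAdj S i.castSucc x ∧ GAdj S i.succ x) → B.card ≤ 3)
    (hSF : SF (contr S i) (fun x y (a : Fin 4) => t x ^ ((a : ℕ) + 1) - t y ^ ((a : ℕ) + 1))) :
    ∃ s : Fin (n+1) → ℝ, Function.Injective s ∧
      SF S (fun x y (a : Fin 4) => s x ^ ((a : ℕ) + 1) - s y ^ ((a : ℕ) + 1)) := by
  classical
  set k := i.castSucc with hk
  have hkk : k ≠ i.succ := (Fin.castSucc_lt_succ (i := i)).ne
  let τ : Fin (n+1) → ℝ[X] := fun x => C (t (i.predAbove x)) + if x = k then X else 0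
  let H : Fin 4 → ℝ[X] → ℝ[X] → ℝ[X] := fun a x y =>
    ∑ j ∈ Finset.range ((a : ℕ) + 1), x ^ j * y ^ ((a : ℕ) + 1 - 1 - j)
  let δ : Fin (n+1) → Fin (n+1) → ℝ[X] := fun x y =>
    if x = k ∧ y = i.succ then 1 else if x = i.succ ∧ y = k then -1 else τ x - τ y
  let D : ℝ → Fin (n+1) → Fin (n+1) → Fin 4 → ℝ := fun ε x y a => ((H a (τ x) (τ y)) * δ x y).eval ε
  have hH : ∀ a x y, H a x y * (x - y) = x ^ ((a : ℕ) + 1) - y ^ ((a : ℕ) + 1) :=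
    fun a x y => geom_sum₂_mul x y _
  have hHs : ∀ a x y, H a x y = H a y x := fun a x y => geom_sum₂_comm _ _ _
  have hτk : τ k = C (t i) + X := by simp [τ, hk]
  have hτi : τ i.succ = C (t i) := by simp [τ, hkk.symm]
  have hH0 : ∀ a : Fin 4, (H a (τ k) (τ i.succ)).eval 0 = ((a : ℕ) + 1 : ℝ) * t i ^ (a : ℕ) := by
    intro a
    rw [hτk, hτi]
    simp only [H, eval_finsetSum, eval_mul, eval_pow, eval_add, eval_C, eval_X, add_zero]
    rw [geom_sum₂_self]
    simp
  have h0 : SF S (D 0) := by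
    refine limit_SF S i t ht hcard hSF (D 0) ?_ ?_ ?_
    · intro a
      simp only [D, δ, ← hk]
      simp [hH0]
    · intro a
      simp only [D, δ, ← hk, hHs a (τ i.succ)]
      simp [hH0, hkk.symm]
    · intro x y a h1 h2
      simp only [D, δ, ← hk] at *
      rw [if_neg h1, if_neg h2, hH]
      simp [τ, apply_ite (Polynomial.eval (0:ℝ))]
  have hLI := (LI_iff_SF S (D 0)).2 h0
  let M : S → Fin (n+1) × Fin 4 → ℝ[X] := fun e ma =>
    if ma.1 = e.val.val.1 then (H ma.2 (τ e.val.val.1) (τ e.val.val.2)) * δ e.val.val.1 e.val.val.2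
    else if ma.1 = e.val.val.2 then (H ma.2 (τ e.val.val.2) (τ e.val.val.1)) * δ e.val.val.2 e.val.val.1
    else 0
  have hM : ∀ ε, (fun (e : S) w => (M e w).eval ε) = fun e : S => grow (D ε) e.val := by
    intro ε
    ext e w
    simp only [M, grow, D]
    split_ifs <;> simp
  have hfin := poly_LI M 0 (by rw [hM]; exact hLI)
  have hfin2 : (insert 0 (Set.range (fun j => t j - t i))).Finite := (Set.finite_range _).insert 0
  obtain ⟨ε, hε⟩ := (hfin.union hfin2).infinite_compl.nonempty
  simp only [Set.mem_compl_iff, Set.mem_union, not_or, Set.mem_insert_iff, Set.mem_range, not_exists,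
    Set.mem_ofPred_eq, not_not] at hε
  obtain ⟨hε1, hε0, hε2⟩ := hε
  rw [hM, LI_iff_SF] at hε1
  refine ⟨fun x => (τ x).eval ε, ?_, ?_⟩
  · have hτe : ∀ x, x ≠ k → (τ x).eval ε = t (i.predAbove x) := by intro x hx; simp [τ, hx]
    have hke : (τ k).eval ε = t i + ε := by rw [hτk]; simp
    have hnk : ∀ x, x ≠ k → (τ x).eval ε ≠ (τ k).eval ε := by
      intro x hx h
      rw [hτe x hx, hke] at h
      exact hε2 (i.predAbove x) (by linarith)
    intro x y hxy
    dsimp only at hxy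
    by_cases hx : x = k
    · by_cases hy : y = k
      · rw [hx, hy]
      · rw [hx] at hxy; exact absurd hxy.symm (hnk y hy)
    · by_cases hy : y = k
      · rw [hy] at hxy; exact absurd hxy (hnk x hx)
      · rw [hτe x hx, hτe y hy] at hxy
        have := ht hxy
        rw [← Fin.succAbove_predAbove hx, ← Fin.succAbove_predAbove hy, this]
  · intro w hs hz heq
    let u : Fin (n+1) → Fin (n+1) → ℝ := fun x y =>
      if (x = k ∧ y = i.succ) ∨ (x = i.succ ∧ y = k) then ε else 1
    have hus : ∀ x y, u x y = u y x := by
      intro x y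
      simp only [u]
      congr 1
      apply propext
      tauto
    have hu0 : ∀ x y, u x y ≠ 0 := by
      intro x y; simp only [u]; split_ifs <;> simp [hε0]
    have := hε1 (fun x y => u x y * w x y) (fun x y => by rw [hs x y, hus x y])
      (fun x y h => by rw [hz x y h, mul_zero]) (by
        intro m a
        rw [← heq m a]
        apply Finset.sum_congr rfl
        intro b _
        have hh : u m b * D ε m b a = (τ m).eval ε ^ ((a : ℕ) + 1) - (τ b).eval ε ^ ((a : ℕ) + 1) := by
          rw [← eval_pow, ← eval_pow, ← eval_sub, ← hH]
          simp only [u, D, δ]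
          by_cases h1 : m = k ∧ b = i.succ
          · rw [if_pos (Or.inl h1), if_pos h1, h1.1, h1.2, hτk, hτi]
            simp; ring
          · by_cases h2 : m = i.succ ∧ b = k
            · rw [if_pos (Or.inr h2), if_neg h1, if_pos h2, h2.1, h2.2, hτk, hτi]
              simp; ring
            · rw [if_neg (by tauto), if_neg h1, if_neg h2, one_mul]
        change _ = w m b * ((τ m).eval ε ^ ((a : ℕ) + 1) - (τ b).eval ε ^ ((a : ℕ) + 1))
        rw [← hh]; ring)
    intro x y
    exact (mul_eq_zero.1 (this x y)).resolve_left (hu0 x y)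

theorem cf_iff {n : ℕ} (S : Set (Pair n)) : CrossingFree n 2 S ↔
    ∀ e ∈ S, ∀ f ∈ S, ∀ g ∈ S, Cross e f → Cross e g → Cross f g → False := by
  classical
  have irr : ∀ e f : Pair n, Cross e f → e ≠ f := by
    rintro e f h rfl
    rcases h with h | h <;> exact lt_irrefl _ h.1
  constructor
  · intro h e he f hf g hg h1 h2 h3
    apply h
    refine ⟨{e, f, g}, ?_, ?_, ?_⟩
    · intro x hx
      simp at hx
      rcases hx with rfl | rfl | rfl <;> assumption
    · exact Finset.card_eq_three.2 ⟨e, f, g, irr _ _ h1, irr _ _ h2, irr _ _ h3, rfl⟩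
    · have sy : ∀ e f : Pair n, Cross e f → Cross f e := fun e f h => Or.symm h
      intro x hx y hy hxy
      simp only [Finset.mem_insert, Finset.mem_singleton] at hx hy
      rcases hx with rfl | rfl | rfl <;> rcases hy with rfl | rfl | rfl <;>
        first | exact absurd rfl hxy | assumption | (apply sy; assumption)
  · rintro h ⟨C, hC, hcard, hcr⟩
    obtain ⟨e, f, g, h1, h2, h3, rfl⟩ := Finset.card_eq_three.1 hcard
    exact h e (hC (by simp)) f (hC (by simp)) g (hC (by simp)) (hcr _ (by simp) _ (by simp) h1)
      (hcr _ (by simp) _ (by simp) h2) (hcr _ (by simp) _ (by simp) h3)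

theorem cf_contr {n : ℕ} (S : Set (Pair (n+1))) (i : Fin n) (h : CrossingFree (n+1) 2 S) :
    CrossingFree n 2 (contr S i) := by
  rw [cf_iff] at h ⊢
  have mono : ∀ {x y}, i.predAbove x < i.predAbove y → x < y :=
    fun {x y} h => (Fin.predAbove_right_monotone i).reflect_lt h
  have lift : ∀ e ∈ contr S i, ∃ e' ∈ S, i.predAbove e'.val.1 = e.val.1 ∧ i.predAbove e'.val.2 = e.val.2 := by
    rintro e ⟨x, y, hG, hx, hy⟩
    have hlt : x < y := mono (by rw [hx, hy]; exact e.2)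
    rcases hG with ⟨h, hm⟩ | ⟨h, hm⟩
    · exact ⟨_, hm, hx, hy⟩
    · exact absurd h hlt.not_gt
  have cr : ∀ (e f : Pair n) (e' f' : Pair (n+1)), i.predAbove e'.val.1 = e.val.1 → i.predAbove e'.val.2 = e.val.2 →
      i.predAbove f'.val.1 = f.val.1 → i.predAbove f'.val.2 = f.val.2 → Cross e f → Cross e' f' := by
    intro e f e' f' h1 h2 h3 h4 hc
    unfold Cross at hc
    rw [← h1, ← h2, ← h3, ← h4] at hc
    rcases hc with ⟨a, b, c⟩ | ⟨a, b, c⟩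
    · exact Or.inl ⟨mono a, mono b, mono c⟩
    · exact Or.inr ⟨mono a, mono b, mono c⟩
  intro e he f hf g hg h1 h2 h3
  obtain ⟨e', he', e1, e2⟩ := lift e he
  obtain ⟨f', hf', f1, f2⟩ := lift f hf
  obtain ⟨g', hg', g1, g2⟩ := lift g hg
  exact h e' he' f' hf' g' hg' (cr _ _ _ _ e1 e2 f1 f2 h1) (cr _ _ _ _ e1 e2 g1 g2 h2)
    (cr _ _ _ _ f1 f2 g1 g2 h3)

theorem exists_good (n : ℕ) : ∀ S : Set (Pair n), CrossingFree n 2 S →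
    ∃ t : Fin n → ℝ, Function.Injective t ∧
      SF S (fun x y (a : Fin 4) => t x ^ ((a : ℕ) + 1) - t y ^ ((a : ℕ) + 1)) := by
  classical
  induction n with
  | zero => exact fun S _ => ⟨fun _ => 0, fun x => x.elim0, fun _ _ _ _ x => x.elim0⟩
  | succ n ih =>
    intro S hS
    rcases Nat.eq_zero_or_pos n with rfl | hn
    · refine ⟨fun _ => 0, fun x y _ => Fin.ext (by omega), fun w _ h _ x y => h x y ?_⟩
      rw [show x = y from Fin.ext (by omega)]; exact GAdj.irrefl
    · obtain ⟨i, hi⟩ := comb n (GAdj S) hn (fun _ _ h => h.symm) (fun _ => GAdj.irrefl) (by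
        intro a b c d e f hab hbc hcd hde hef h1 h2 h3
        have lift : ∀ {x y}, x < y → GAdj S x y → ∃ h : x < y, (⟨(x, y), h⟩ : Pair (n+1)) ∈ S := by
          rintro x y hxy (h | ⟨h, _⟩)
          · exact h
          · exact absurd h hxy.not_gt
        obtain ⟨_, m1⟩ := lift (hab.trans (hbc.trans hcd)) h1
        obtain ⟨_, m2⟩ := lift (hbc.trans (hcd.trans hde)) h2
        obtain ⟨_, m3⟩ := lift (hcd.trans (hde.trans hef)) h3
        exact (cf_iff S).1 hS _ m1 _ m2 _ m3 (Or.inl ⟨hab, hbc.trans hcd, hde⟩)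
          (Or.inl ⟨hab.trans hbc, hcd, hde.trans hef⟩) (Or.inl ⟨hbc, hcd.trans hde, hef⟩))
      obtain ⟨t, ht, hSF⟩ := ih (contr S i) (cf_contr S i hS)
      refine step S i t ht ?_ hSF
      intro B hB
      refine le_trans (Finset.card_le_card ?_) hi
      intro x hx
      simpa using hB x hx

theorem goodT_open {n : ℕ} (T : Set (Pair n)) : IsOpen {t : Fin n → ℝ | LinearIndependent ℝ
      (fun e : T => bjRow (fun i (a : Fin 4) => t i ^ ((a : ℕ) + 1)) e.val)} := by
  have hc : Continuous (fun (t : Fin n → ℝ) (e : T) =>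
      bjRow (fun i (a : Fin 4) => t i ^ ((a : ℕ) + 1)) e.val) := by
    refine continuous_pi fun e => continuous_pi fun ma => ?_
    unfold bjRow
    split_ifs <;> fun_prop
  exact (isOpen_setOfPred_linearIndependent (𝕜 := ℝ) (E := Fin n × Fin 4 → ℝ) (ι := T)).preimage hc

open Polynomial in
theorem goodT_dense {n : ℕ} (T : Set (Pair n)) (hT : CrossingFree n 2 T) :
    Dense {t : Fin n → ℝ | LinearIndependent ℝ
      (fun e : T => bjRow (fun i (a : Fin 4) => t i ^ ((a : ℕ) + 1)) e.val)} := by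
  classical
  obtain ⟨t1, _, h1⟩ := exists_good n T hT
  intro t0
  let τ : Fin n → ℝ[X] := fun x => C (t0 x) + X * C (t1 x - t0 x)
  let M : T → Fin n × Fin 4 → ℝ[X] := fun e ma =>
    if ma.1 = e.val.val.1 then τ e.val.val.1 ^ ((ma.2 : ℕ) + 1) - τ e.val.val.2 ^ ((ma.2 : ℕ) + 1)
    else if ma.1 = e.val.val.2 then τ e.val.val.2 ^ ((ma.2 : ℕ) + 1) - τ e.val.val.1 ^ ((ma.2 : ℕ) + 1)
    else 0
  let p : ℝ → Fin n → ℝ := fun s x => t0 x + s * (t1 x - t0 x)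
  have hM : ∀ s, (fun (e : T) w => (M e w).eval s) =
      fun e : T => bjRow (fun i (a : Fin 4) => p s i ^ ((a : ℕ) + 1)) e.val := by
    intro s
    ext e w
    simp only [M, bjRow, p, τ]
    split_ifs <;> simp
  have hp1 : p 1 = t1 := by ext x; simp [p]
  have hp0 : p 0 = t0 := by ext x; simp [p]
  have hfin := poly_LI M 1 (by rw [hM, hp1]; exact (LI_iff_SF T (fun x y (a : Fin 4) => t1 x ^ ((a : ℕ) + 1) - t1 y ^ ((a : ℕ) + 1))).2 h1)
  have hd : Dense {s | ¬ LinearIndependent ℝ (fun e w => (M e w).eval s)}ᶜ := (Set.Finite.countable hfin).dense_compl ℝ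
  have hpc : Continuous p := by fun_prop
  have := hpc.range_subset_closure_image_dense hd
  refine closure_mono ?_ (this ⟨0, hp0⟩)
  rintro _ ⟨s, hs, rfl⟩
  simp only [Set.mem_compl_iff, Set.mem_ofPred_eq, not_not, hM] at hs
  exact hs

/-- For `n ≥ 5`, 2-triangulations are isostatic for generic positions along the
moment curve in dimension 4: the set of good parameter tuples is open and dense in `ℝⁿ`. -/
theorem stmt3 (n : ℕ) (hn : 5 ≤ n) : IsOpen (goodSet n) ∧ Dense (goodSet n) := by
  have h : goodSet n = ⋂ T : {T : Set (Pair n) // IsTriangulation n 2 T},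
      {t : Fin n → ℝ | LinearIndependent ℝ
        (fun e : T.val => bjRow (fun i (a : Fin 4) => t i ^ ((a : ℕ) + 1)) e.val)} := by
    ext t
    simp only [goodSet, Set.mem_ofPred_eq, Set.mem_iInter, Subtype.forall]
  rw [h]
  exact ⟨isOpen_iInter_of_finite fun T => goodT_open T.val,
    dense_iInter_of_isOpen (fun T => goodT_open T.val) fun T => goodT_dense T.val T.2.1⟩
end

section
/- Let q₁,…,q₉ ∈ ℝ² be points in convex position such that the three lines through q₁ and q₆, through q₃ and q₇, and through q₄ and q₉ have a common point (for instance q_i = (i, i²) for i = 1,…,9). Let E be the set of all pairs of {1,…,9} except {1,6}, {3,7}, {4,9}. Then E is a 3-triangulation of the 9-gon, and the rows of the cofactor rigidity matrix C₆(q₁,…,q₉) indexed by E form a circuit: they are linearly dependent, but the rows indexed by any proper subset of E are linearly independent. -/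
open scoped BigOperators

/-- The set of all pairs of `{1,…,9}` except `{1,6}`, `{3,7}`, `{4,9}` (0-indexed:
`(0,5)`, `(2,6)`, `(3,8)`). -/
def E5 : Set (Pair 9) :=
  {e | e.val ≠ ((0 : Fin 9), (5 : Fin 9)) ∧ e.val ≠ ((2 : Fin 9), (6 : Fin 9)) ∧
       e.val ≠ ((3 : Fin 9), (8 : Fin 9))}

/-! ### Brackets -/

noncomputable def brp (q : Fin 9 → ℝ × ℝ) (i j : Fin 9) (p : ℝ × ℝ) : ℝ :=
  det2 (q i - q j) (q i - p)

lemma brp_antisymm (q : Fin 9 → ℝ × ℝ) (i j : Fin 9) (p : ℝ × ℝ) :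
    brp q j i p = - brp q i j p := by
  simp only [brp, det2, Prod.fst_sub, Prod.snd_sub]; ring

lemma brp_swap (q : Fin 9 → ℝ × ℝ) (i j k : Fin 9) :
    brp q i k (q j) = - brp q i j (q k) := by
  simp only [brp, det2, Prod.fst_sub, Prod.snd_sub]; ring

lemma brp_self (q : Fin 9 → ℝ × ℝ) (i : Fin 9) (p : ℝ × ℝ) : brp q i i p = 0 := by
  simp [brp, det2]

lemma brp_pos (q : Fin 9 → ℝ × ℝ) (hq : ConvexPosition q) (i j k : Fin 9) (h : i < j)
    (h' : j < k) : 0 < brp q i j (q k) := by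
  have := hq.2 i j k h h'
  simp only [brp, det2, Prod.fst_sub, Prod.snd_sub] at *; linarith

lemma brp_cyc (q : Fin 9 → ℝ × ℝ) (i j k : Fin 9) :
    brp q j k (q i) = brp q i j (q k) := by
  simp only [brp, det2, Prod.fst_sub, Prod.snd_sub]; ring

lemma brp_right (q : Fin 9 → ℝ × ℝ) (i j : Fin 9) : brp q i j (q j) = 0 := by
  simp only [brp, det2, Prod.fst_sub, Prod.snd_sub]; ring

lemma brp_left (q : Fin 9 → ℝ × ℝ) (i j : Fin 9) : brp q i j (q i) = 0 := by
  simp only [brp, det2, Prod.fst_sub, Prod.snd_sub]; ring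

lemma brp_ne (q : Fin 9 → ℝ × ℝ) (hq : ConvexPosition q) (i j k : Fin 9) (hij : i ≠ j)
    (hik : i ≠ k) (hjk : j ≠ k) : brp q i j (q k) ≠ 0 := by
  have key := brp_pos q hq
  rcases lt_or_gt_of_ne hij with h1 | h1 <;> rcases lt_or_gt_of_ne hik with h2 | h2 <;>
    rcases lt_or_gt_of_ne hjk with h3 | h3
  · exact (key i j k h1 h3).ne'
  · have := key i k j h2 h3
    rw [brp_swap] at this; intro h0; linarith
  · exact absurd (h1.trans h3) (not_lt.2 h2.le)
  · have := key k i j h2 h1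
    rw [← brp_cyc] at this; exact this.ne'
  · have := key j i k h1 h2
    rw [brp_antisymm] at this; intro h0; linarith
  · exact absurd (h2.trans h3) (not_lt.2 h1.le)
  · have := key j k i h3 h2
    rw [brp_cyc] at this; exact this.ne'
  · have := key k j i h3 h1
    rw [← brp_cyc, brp_antisymm] at this; intro h0; linarith

/-! ### Homogeneous Lagrange identity -/

lemma lagrange_hom {ι : Type*} [DecidableEq ι] (v : ι → ℝ × ℝ) (L : List (ℝ × ℝ)) :
    ∀ s : Finset ι, (∀ a ∈ s, ∀ b ∈ s, a ≠ b → det2 (v a) (v b) ≠ 0) → L.length + 2 = s.card →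
    ∑ j ∈ s, (L.map (fun u => det2 (v j) u)).prod / ∏ k ∈ s.erase j, det2 (v j) (v k) = 0 := by
  induction L with
  | nil =>
    intro s hs hc
    obtain ⟨a, b, hab, rfl⟩ := Finset.card_eq_two.1 (by simpa using hc.symm)
    have h1 : ({a, b} : Finset ι).erase a = {b} := by
      ext x; simp only [Finset.mem_erase, Finset.mem_insert, Finset.mem_singleton]; grind
    have h2 : ({a, b} : Finset ι).erase b = {a} := by
      ext x; simp only [Finset.mem_erase, Finset.mem_insert, Finset.mem_singleton]; grind
    have e : det2 (v b) (v a) = - det2 (v a) (v b) := by simp only [det2]; ring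
    rw [Finset.sum_pair hab, h1, h2]
    simp only [List.map_nil, List.prod_nil, Finset.prod_singleton]
    rw [e, div_neg]; ring
  | cons u L ih =>
    intro s hs hc
    have hone : ∀ a ∈ s, ∑ j ∈ s, det2 (v j) (v a) * (L.map (fun u => det2 (v j) u)).prod /
        ∏ k ∈ s.erase j, det2 (v j) (v k) = 0 := by
      intro a ha
      have := ih (s.erase a) (fun x hx y hy hxy => hs x (Finset.mem_of_mem_erase hx) y
        (Finset.mem_of_mem_erase hy) hxy) (by
          rw [Finset.card_erase_of_mem ha]; simp only [List.length_cons] at hc; omega)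
      rw [← Finset.sum_erase_add _ _ ha]
      have h0 : det2 (v a) (v a) = 0 := by simp only [det2]; ring
      rw [h0, zero_mul, zero_div, add_zero, ← this]
      apply Finset.sum_congr rfl
      intro j hj
      have hja : j ≠ a := Finset.ne_of_mem_erase hj
      have hjs := Finset.mem_of_mem_erase hj
      rw [← Finset.mul_prod_erase (s.erase j) _ (Finset.mem_erase.2 ⟨hja.symm, ha⟩),
        Finset.erase_right_comm, mul_div_mul_left _ _ (hs j hjs a ha hja)]
    have h1 : 1 < s.card := by simp only [List.length_cons] at hc; omega
    obtain ⟨a, ha, b, hb, hab⟩ := Finset.one_lt_card.1 h1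
    have hd := hs a ha b hb hab
    have e : ∀ x : ℝ × ℝ, det2 x u = (det2 u (v b) / det2 (v a) (v b)) * det2 x (v a) +
        (det2 (v a) u / det2 (v a) (v b)) * det2 x (v b) := by
      intro x
      field_simp
      simp only [det2]; ring
    have : ∀ j ∈ s, ((u :: L).map (fun u => det2 (v j) u)).prod /
        ∏ k ∈ s.erase j, det2 (v j) (v k) =
        (det2 u (v b) / det2 (v a) (v b)) * (det2 (v j) (v a) *
          (L.map (fun u => det2 (v j) u)).prod / ∏ k ∈ s.erase j, det2 (v j) (v k)) +
        (det2 (v a) u / det2 (v a) (v b)) * (det2 (v j) (v b) *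
          (L.map (fun u => det2 (v j) u)).prod / ∏ k ∈ s.erase j, det2 (v j) (v k)) := by
      intro j _
      rw [List.map_cons, List.prod_cons, e (v j)]; ring
    rw [Finset.sum_congr rfl this, Finset.sum_add_distrib, ← Finset.mul_sum, ← Finset.mul_sum,
      hone a ha, hone b hb]; ring

/-! ### Monomials to products of linear forms -/

lemma mono_to_prod {ι : Type*} (s : Finset ι) (v : ι → ℝ × ℝ) (w : ι → ℝ)
    (h : ∀ a : Fin 6, ∑ j ∈ s, w j * ((v j).1 ^ (6 - 1 - (a : ℕ)) * (v j).2 ^ (a : ℕ)) = 0)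
    (L : List (ℝ × ℝ)) : ∀ m n : ℕ, L.length + m + n = 5 →
    ∑ j ∈ s, w j * ((v j).1 ^ m * (v j).2 ^ n * (L.map (fun u => det2 (v j) u)).prod) = 0 := by
  induction L with
  | nil =>
    intro m n hmn
    simp only [List.length_nil] at hmn
    have := h ⟨n, by omega⟩
    rw [← this]
    apply Finset.sum_congr rfl
    intro j _
    have : m = 6 - 1 - n := by omega
    simp [this]
  | cons u L ih =>
    intro m n hmn
    simp only [List.length_cons] at hmn
    have h1 := ih (m+1) n (by omega)
    have h2 := ih m (n+1) (by omega)
    have : ∀ j ∈ s, w j * ((v j).1 ^ m * (v j).2 ^ n *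
        ((u :: L).map (fun u => det2 (v j) u)).prod) =
        u.2 * (w j * ((v j).1 ^ (m+1) * (v j).2 ^ n * (L.map (fun u => det2 (v j) u)).prod)) -
        u.1 * (w j * ((v j).1 ^ m * (v j).2 ^ (n+1) * (L.map (fun u => det2 (v j) u)).prod)) := by
      intro j _
      rw [List.map_cons, List.prod_cons]
      have : det2 (v j) u = (v j).1 * u.2 - (v j).2 * u.1 := rfl
      rw [this]; ring
    rw [Finset.sum_congr rfl this, Finset.sum_sub_distrib, ← Finset.mul_sum, ← Finset.mul_sum,
      h1, h2]; ring

/-! ### Stresses -/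

def IsStress (q : Fin 9 → ℝ × ℝ) (w : Fin 9 → Fin 9 → ℝ) : Prop :=
  ∀ i, ∀ a : Fin 6, ∑ j ∈ Finset.univ.erase i, w i j * cvec 6 (q i) (q j) a = 0

noncomputable def den (q : Fin 9 → ℝ × ℝ) (i j : Fin 9) : ℝ :=
  ∏ k ∈ (Finset.univ.erase i).erase j, brp q i j (q k)

lemma den_antisymm (q : Fin 9 → ℝ × ℝ) (i j : Fin 9) (h : i ≠ j) : den q j i = - den q i j := by
  unfold den
  rw [Finset.erase_right_comm]
  have : ∀ k, brp q j i (q k) = (-1) * brp q i j (q k) := by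
    intro k; rw [brp_antisymm]; ring
  simp only [this]
  rw [Finset.prod_mul_distrib, Finset.prod_const]
  rw [Finset.card_erase_of_mem (by simp [h.symm]), Finset.card_erase_of_mem (by simp)]
  simp
  norm_num

lemma den_ne (q : Fin 9 → ℝ × ℝ) (hq : ConvexPosition q) (i j : Fin 9) (h : i ≠ j) :
    den q i j ≠ 0 := by
  unfold den
  rw [Finset.prod_ne_zero_iff]
  intro k hk
  simp only [Finset.mem_erase, Finset.mem_univ, and_true] at hk
  exact brp_ne q hq i j k h (Ne.symm hk.2) (Ne.symm hk.1)

lemma stress_p (q : Fin 9 → ℝ × ℝ) (hq : ConvexPosition q) (p : ℝ × ℝ) :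
    IsStress q (fun i j => brp q i j p / den q i j) := by
  intro i a
  have := lagrange_hom (fun j => q i - q j)
    ((q i - p) :: (List.replicate (6 - 1 - (a : ℕ)) ((0, 1) : ℝ × ℝ) ++
      List.replicate (a : ℕ) ((-1, 0) : ℝ × ℝ))) (Finset.univ.erase i)
    (by
      intro x hx y hy hxy
      simp only [Finset.mem_erase, Finset.mem_univ, and_true] at hx hy
      exact brp_ne q hq i x y (Ne.symm hx) (Ne.symm hy) hxy)
    (by
      simp
      omega)
  rw [← this]
  apply Finset.sum_congr rfl
  intro j _
  simp only [List.map_cons, List.map_append, List.map_replicate, List.prod_cons, List.prod_append,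
    List.prod_replicate, cvec, den, brp]
  have e1 : det2 (q i - q j) (0, 1) = (q i).1 - (q j).1 := by simp [det2]
  have e2 : det2 (q i - q j) (-1, 0) = (q i).2 - (q j).2 := by simp [det2]
  rw [e1, e2]; ring

lemma stress_T (q : Fin 9 → ℝ × ℝ) (w : Fin 9 → Fin 9 → ℝ)
    (hw : IsStress q w) (i a b c : Fin 9) (hia : i ≠ a) (hib : i ≠ b) (hic : i ≠ c)
    (hab : a ≠ b) (hac : a ≠ c) (hbc : b ≠ c) :
    (w i a * den q i a) * brp q i b (q c) - (w i b * den q i b) * brp q i a (q c)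
      + (w i c * den q i c) * brp q i a (q b) = 0 := by
  set R : Finset (Fin 9) := (((Finset.univ.erase i).erase a).erase b).erase c with hR
  have hcard : R.card = 5 := by
    rw [hR, Finset.card_erase_of_mem (by simp [*, Ne.symm]), Finset.card_erase_of_mem
      (by simp [*, Ne.symm]), Finset.card_erase_of_mem (by simp [*, Ne.symm]),
      Finset.card_erase_of_mem (by simp)]
    simp
  have hs : Finset.univ.erase i = insert a (insert b (insert c R)) := by
    ext x; simp only [hR, Finset.mem_erase, Finset.mem_insert, Finset.mem_univ]; grind
  have key := mono_to_prod (Finset.univ.erase i) (fun j => q i - q j) (fun j => w i j)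
    (fun a => hw i a) (R.toList.map (fun k => q i - q k)) 0 0 (by simp [hcard])
  simp only [pow_zero, one_mul, List.map_map, Function.comp_def, Finset.prod_map_toList] at key
  change ∑ j ∈ Finset.univ.erase i, w i j * ∏ k ∈ R, brp q i j (q k) = 0 at key
  have hcR : c ∉ R := by simp [hR]
  have hbR : b ∉ insert c R := by simp [hR, hbc]
  have haR : a ∉ insert b (insert c R) := by simp [hR, hab, hac]
  rw [hs, Finset.sum_insert haR, Finset.sum_insert hbR, Finset.sum_insert hcR] at key
  have hz : ∑ j ∈ R, w i j * ∏ k ∈ R, brp q i j (q k) = 0 := by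
    apply Finset.sum_eq_zero
    intro j hj
    rw [Finset.prod_eq_zero hj (brp_right q i j), mul_zero]
  rw [hz] at key
  have da : den q i a = brp q i a (q b) * (brp q i a (q c) * ∏ k ∈ R, brp q i a (q k)) := by
    have : (Finset.univ.erase i).erase a = insert b (insert c R) := by
      rw [hs, Finset.erase_insert haR]
    unfold den; rw [this, Finset.prod_insert hbR, Finset.prod_insert hcR]
  have db : den q i b = brp q i b (q a) * (brp q i b (q c) * ∏ k ∈ R, brp q i b (q k)) := by
    have : (Finset.univ.erase i).erase b = insert a (insert c R) := by
      ext x; simp only [hR, Finset.mem_erase, Finset.mem_insert, Finset.mem_univ]; grind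
    unfold den; rw [this, Finset.prod_insert (by simp [hR, hac]), Finset.prod_insert hcR]
  have dc : den q i c = brp q i c (q a) * (brp q i c (q b) * ∏ k ∈ R, brp q i c (q k)) := by
    have : (Finset.univ.erase i).erase c = insert a (insert b R) := by
      ext x; simp only [hR, Finset.mem_erase, Finset.mem_insert, Finset.mem_univ]; grind
    unfold den; rw [this, Finset.prod_insert (by simp [hR, hab]),
      Finset.prod_insert (by simp [hR])]
  rw [da, db, dc, brp_swap q i a b, brp_swap q i a c, brp_swap q i b c]
  linear_combination (brp q i a (q b) * brp q i a (q c) * brp q i b (q c)) * key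

lemma rep (q : Fin 9 → ℝ × ℝ) (hq : ConvexPosition q) (U : Fin 9 → Fin 9 → ℝ)
    (hanti : ∀ i j, U j i = - U i j)
    (hT : ∀ i a b c, U i a * brp q i b (q c) - U i b * brp q i a (q c) +
      U i c * brp q i a (q b) = 0) (x y z : Fin 9) (hxy : x ≠ y) (hxz : x ≠ z) (hyz : y ≠ z)
    (i j : Fin 9) :
    U i j * brp q x y (q z) = U y z * brp q i j (q x) - U x z * brp q i j (q y)
      + U x y * brp q i j (q z) := by
  obtain ⟨V, hV⟩ : ∃ V : Fin 9 → Fin 9 → ℝ, ∀ i j, V i j = U i j * brp q x y (q z) -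
    (U y z * brp q i j (q x) - U x z * brp q i j (q y) + U x y * brp q i j (q z)) :=
    ⟨_, fun _ _ => rfl⟩
  have hVa : ∀ i j, V j i = - V i j := by
    intro i j; rw [hV, hV, hanti i j, brp_antisymm q i j, brp_antisymm q i j, brp_antisymm q i j]
    ring
  have pl : ∀ i a b c p, brp q i a p * brp q i b (q c) - brp q i b p * brp q i a (q c) +
      brp q i c p * brp q i a (q b) = 0 := by
    intro i a b c p
    simp only [brp, det2, Prod.fst_sub, Prod.snd_sub]; ring
  have hVT : ∀ i a b c, V i a * brp q i b (q c) - V i b * brp q i a (q c) +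
      V i c * brp q i a (q b) = 0 := by
    intro i a b c
    simp only [hV]
    linear_combination brp q x y (q z) * hT i a b c - U y z * pl i a b c (q x) +
      U x z * pl i a b c (q y) - U x y * pl i a b c (q z)
  have hself : ∀ i, V i i = 0 := fun i => by linarith [hVa i i]
  have vxy : V x y = 0 := by
    rw [hV, brp_left, brp_right]; ring
  have vxz : V x z = 0 := by
    rw [hV, brp_left, brp_right, brp_swap q x y z]; ring
  have vyz : V y z = 0 := by
    rw [hV, brp_left, brp_right, brp_cyc q x y z]; ring
  have n := brp_ne q hq x y z hxy hxz hyz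
  have vx : ∀ c, V x c = 0 := by
    intro c
    have := hVT x y z c
    rw [vxy, vxz] at this
    simpa [n] using this
  have vy : ∀ c, V y c = 0 := by
    intro c
    have := hVT y z x c
    rw [vyz, hVa x y, vxy, brp_cyc q x y z] at this
    simpa [n] using this
  have hall : V i j = 0 := by
    by_cases h1 : i = x
    · rw [h1]; exact vx j
    by_cases h2 : i = y
    · rw [h2]; exact vy j
    have := hVT i x y j
    rw [hVa x i, hVa y i, vx, vy] at this
    have n2 := brp_ne q hq i x y h1 h2 hxy
    simpa [n2] using this
  linarith [hV i j]

/-! ### The concurrency point -/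

lemma onLine_brp (q : Fin 9 → ℝ × ℝ) (i j : Fin 9) (p : ℝ × ℝ) (h : onLine (q i) (q j) p) :
    brp q i j p = 0 := by
  simp only [onLine, brp, det2, Prod.fst_sub, Prod.snd_sub] at *; linarith

lemma meet (q : Fin 9 → ℝ × ℝ) (a b c d : Fin 9) (p : ℝ × ℝ) (h1 : brp q a b p = 0)
    (h2 : brp q c d p = 0) (i j : Fin 9) :
    (brp q c d (q a) - brp q c d (q b)) * brp q i j p =
      (- brp q c d (q b)) * brp q i j (q a) + brp q c d (q a) * brp q i j (q b) := by
  have key : (brp q c d (q a) - brp q c d (q b)) * brp q i j p -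
      ((- brp q c d (q b)) * brp q i j (q a) + brp q c d (q a) * brp q i j (q b)) =
      det2 (q i - q j) (q c - q d) * brp q a b p -
      det2 (q i - q j) (q a - q b) * brp q c d p := by
    simp only [brp, det2, Prod.fst_sub, Prod.snd_sub]; ring
  rw [h1, h2] at key
  linarith

def sg (i j k : Fin 9) : ℤ :=
  if k = i ∨ k = j then 0 else if i < k ∧ k < j then -1 else 1

lemma sg_brp (q : Fin 9 → ℝ × ℝ) (hq : ConvexPosition q) (i j k : Fin 9) (h : i < j) :
    (sg i j k = 0 → brp q i j (q k) = 0) ∧ (sg i j k = 1 → 0 < brp q i j (q k)) ∧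
    (sg i j k = -1 → brp q i j (q k) < 0) := by
  unfold sg
  by_cases h1 : k = i
  · subst h1; simp [brp_left]
  by_cases h2 : k = j
  · subst h2; simp [brp_right]
  by_cases h3 : i < k
  · by_cases h4 : k < j
    · have := brp_pos q hq i k j h3 h4
      rw [brp_swap] at this
      simp [h1, h2, h3, h4]; linarith
    · have := brp_pos q hq i j k h (lt_of_le_of_ne (not_lt.1 h4) (Ne.symm h2))
      simp [h1, h2, h3, h4, this]
  · have := brp_pos q hq k i j (lt_of_le_of_ne (not_lt.1 h3) h1) h
    rw [← brp_cyc] at this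
    simp [h1, h2, h3, this]

lemma p_ne (q : Fin 9 → ℝ × ℝ) (hq : ConvexPosition q) (p : ℝ × ℝ)
    (a b : Fin 9) (α β γ : ℝ) (hα : 0 < α) (hβ : 0 < β)
    (h : ∀ i j, γ * brp q i j p = α * brp q i j (q a) + β * brp q i j (q b))
    (i j : Fin 9) (hij : i < j)
    (hs : (sg i j a + sg i j b ≠ 0)) : brp q i j p ≠ 0 := by
  intro h0
  have h1 := h i j
  rw [h0, mul_zero] at h1
  obtain ⟨a0, a1, a2⟩ := sg_brp q hq i j a hij
  obtain ⟨b0, b1, b2⟩ := sg_brp q hq i j b hij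
  have hv : ∀ k, sg i j k = 0 ∨ sg i j k = 1 ∨ sg i j k = -1 := by
    intro k; unfold sg; split_ifs <;> simp
  rcases hv a with ha | ha | ha <;> rcases hv b with hb | hb | hb <;>
    simp only [ha, hb, forall_const, ne_eq] at *
  all_goals first
    | nlinarith
    | (exfalso; revert hs; norm_num)

lemma comb_s5 : ∀ i j : Fin 9, i < j → (i, j) ≠ (0, 5) → (i, j) ≠ (2, 6) → (i, j) ≠ (3, 8) →
    sg i j 0 + sg i j 5 ≠ 0 ∨ sg i j 2 + sg i j 6 ≠ 0 ∨ sg i j 3 + sg i j 8 ≠ 0 := by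
  decide

lemma p_ne_all (q : Fin 9 → ℝ × ℝ) (hq : ConvexPosition q) (p : ℝ × ℝ)
    (h1 : brp q 0 5 p = 0) (h2 : brp q 2 6 p = 0) (h3 : brp q 3 8 p = 0)
    (i j : Fin 9) (hij : i < j) (e1 : (i, j) ≠ (0, 5)) (e2 : (i, j) ≠ (2, 6))
    (e3 : (i, j) ≠ (3, 8)) : brp q i j p ≠ 0 := by
  have P : ∀ i j k : Fin 9, i < j → sg i j k = 1 → 0 < brp q i j (q k) := fun i j k h =>
    (sg_brp q hq i j k h).2.1
  have N : ∀ i j k : Fin 9, i < j → sg i j k = -1 → 0 < - brp q i j (q k) := fun i j k h h' => by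
    have := (sg_brp q hq i j k h).2.2 h'
    linarith
  rcases comb_s5 i j hij e1 e2 e3 with h | h | h
  · exact p_ne q hq p 0 5 _ _ _ (N 2 6 5 (by decide) (by decide)) (P 2 6 0 (by decide) (by decide))
      (meet q 0 5 2 6 p h1 h2) i j hij h
  · exact p_ne q hq p 2 6 _ _ _ (N 3 8 6 (by decide) (by decide)) (P 3 8 2 (by decide) (by decide))
      (meet q 2 6 3 8 p h2 h3) i j hij h
  · refine p_ne q hq p 3 8 _ _ (-(brp q 0 5 (q 3) - brp q 0 5 (q 8)))
      (P 0 5 8 (by decide) (by decide)) (N 0 5 3 (by decide) (by decide))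
      (fun i j => ?_) i j hij h
    linear_combination - meet q 3 8 0 5 p h3 h1 i j

/-! ### Uniqueness -/

lemma stress_unique (q : Fin 9 → ℝ × ℝ) (hq : ConvexPosition q) (p : ℝ × ℝ)
    (h1 : brp q 0 5 p = 0) (h2 : brp q 2 6 p = 0) (h3 : brp q 3 8 p = 0)
    (w : Fin 9 → Fin 9 → ℝ) (hsym : ∀ i j, w i j = w j i) (hw : IsStress q w)
    (w1 : w 0 5 = 0) (w2 : w 2 6 = 0) (i j : Fin 9) (hij : i < j)
    (e1 : (i, j) ≠ (0, 5)) (e2 : (i, j) ≠ (2, 6))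
    (e3 : (i, j) ≠ (3, 8)) (hwij : w i j = 0) (k l : Fin 9) (hkl : k ≠ l) : w k l = 0 := by
  obtain ⟨U, hU⟩ : ∃ U : Fin 9 → Fin 9 → ℝ, ∀ i j, U i j = if i = j then 0 else
    w i j * den q i j := ⟨_, fun _ _ => rfl⟩
  have hself : ∀ i, U i i = 0 := fun i => by simp [hU]
  have hne : ∀ i j, i ≠ j → U i j = w i j * den q i j := fun i j h => by simp [hU, h]
  have hanti : ∀ i j, U j i = - U i j := by
    intro i j
    by_cases h : i = j
    · subst h; simp [hself]
    · rw [hne _ _ h, hne _ _ (Ne.symm h), den_antisymm q i j h, hsym j i]; ring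
  have hT : ∀ i a b c, U i a * brp q i b (q c) - U i b * brp q i a (q c) +
      U i c * brp q i a (q b) = 0 := by
    intro i a b c
    by_cases hia : i = a
    · subst hia; simp [hself, brp_self]
    by_cases hib : i = b
    · subst hib; simp [hself, brp_self, brp_left]
    by_cases hic : i = c
    · subst hic; simp [hself, brp_left]
    by_cases hab : a = b
    · subst hab; simp [brp_right]
    by_cases hac : a = c
    · subst hac; rw [brp_right, brp_swap]; ring
    by_cases hbc : b = c
    · subst hbc; simp [brp_right]
    rw [hne _ _ hia, hne _ _ hib, hne _ _ hic]
    exact stress_T q w hw i a b c hia hib hic hab hac hbc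
  have R := rep q hq U hanti hT 0 5 2 (by decide) (by decide) (by decide)
  have u1 : U 0 5 = 0 := by rw [hne _ _ (by decide), w1, zero_mul]
  have u2 : U 2 6 = 0 := by rw [hne _ _ (by decide), w2, zero_mul]
  have uij : U i j = 0 := by rw [hne _ _ hij.ne, hwij, zero_mul]
  have M := meet q 0 5 2 6 p h1 h2
  have R26 := R 2 6
  rw [u1, u2] at R26
  have Rij := R i j
  rw [uij, u1] at Rij
  have Mij := M i j
  have n052 := brp_ne q hq 0 5 2 (by decide) (by decide) (by decide)
  have n260 := brp_ne q hq 2 6 0 (by decide) (by decide) (by decide)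
  have n265 := brp_ne q hq 2 6 5 (by decide) (by decide) (by decide)
  have npp := p_ne_all q hq p h1 h2 h3 i j hij e1 e2 e3
  have P260 := (sg_brp q hq 2 6 0 (by decide)).2.1 (by decide)
  have N265 := (sg_brp q hq 2 6 5 (by decide)).2.2 (by decide)
  have u02 : U 0 2 = 0 := by
    have : U 0 2 * ((brp q 2 6 (q 0) - brp q 2 6 (q 5)) * brp q i j p) = 0 := by
      linear_combination U 0 2 * Mij + brp q 2 6 (q 0) * Rij - brp q i j (q 0) * R26
    rcases mul_eq_zero.1 this with h | h
    · exact h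
    · rcases mul_eq_zero.1 h with h | h
      · linarith
      · exact absurd h npp
  have u52 : U 5 2 = 0 := by
    rw [u02] at R26
    have : U 5 2 * brp q 2 6 (q 0) = 0 := by linarith
    simpa [n260] using this
  have Rkl := R k l
  rw [u02, u52, u1] at Rkl
  have : U k l = 0 := by simpa [n052] using Rkl
  rw [hne _ _ hkl] at this
  simpa [den_ne q hq k l hkl] using this

/-! ### Rows and stresses -/

noncomputable def ext (c : Pair 9 → ℝ) (i j : Fin 9) : ℝ :=
  if h : i < j then c ⟨(i, j), h⟩ else if h : j < i then c ⟨(j, i), h⟩ else 0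

lemma ext_symm (c : Pair 9 → ℝ) (i j : Fin 9) : ext c i j = ext c j i := by
  unfold ext
  rcases lt_trichotomy i j with h | h | h
  · simp [h, h.not_gt]
  · simp [h]
  · simp [h, h.not_gt]

lemma ext_pair (c : Pair 9 → ℝ) (e : Pair 9) : ext c e.val.1 e.val.2 = c e := by
  unfold ext
  rw [dif_pos e.2]

lemma cvec_neg (a b : ℝ × ℝ) (t : Fin 6) : cvec 6 a b t = - cvec 6 b a t := by
  fin_cases t <;> simp [cvec] <;> ring

lemma sum_rows (q : Fin 9 → ℝ × ℝ) (c : Pair 9 → ℝ) (i : Fin 9) (a : Fin 6) :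
    (∑ e, c e • cofRow 6 q e) (i, a) =
      ∑ j ∈ Finset.univ.erase i, ext c i j * cvec 6 (q i) (q j) a := by
  rw [Finset.sum_apply]
  have h1 : ∀ e : Pair 9, (c e • cofRow 6 q e) (i, a) =
      (fun x : Fin 9 × Fin 9 => (if i = x.1 then ext c i x.2 * cvec 6 (q i) (q x.2) a else 0) +
        (if i = x.2 then ext c i x.1 * cvec 6 (q i) (q x.1) a else 0)) e.val := by
    intro e
    have hlt := e.2
    simp only [Pi.smul_apply, smul_eq_mul, cofRow]
    by_cases h : i = e.val.1
    · have h' : i ≠ e.val.2 := by rw [h]; exact hlt.ne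
      have := ext_pair c e
      simp only [h, if_true, hlt.ne, if_false, this]; simp
    · by_cases h' : i = e.val.2
      · have := ext_pair c e
        rw [if_neg h, if_pos h', if_neg h, if_pos h', h', ext_symm, this, cvec_neg (q e.val.2)]
        ring
      · simp [h, h']
  rw [Finset.sum_congr rfl (fun e _ => h1 e)]
  rw [← Finset.sum_subtype (Finset.univ.filter (fun x : Fin 9 × Fin 9 => x.1 < x.2))
    (p := fun x : Fin 9 × Fin 9 => x.1 < x.2) (by simp)
    (fun x : Fin 9 × Fin 9 => (if i = x.1 then ext c i x.2 * cvec 6 (q i) (q x.2) a else 0) +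
        (if i = x.2 then ext c i x.1 * cvec 6 (q i) (q x.1) a else 0))]
  rw [Finset.sum_filter, Fintype.sum_prod_type]
  have h2 : ∀ x y : Fin 9, (if x < y then ((if i = x then ext c i y * cvec 6 (q i) (q y) a else 0)
      + (if i = y then ext c i x * cvec 6 (q i) (q x) a else 0)) else 0) =
      (if i = x then (if i < y then ext c i y * cvec 6 (q i) (q y) a else 0) else 0) +
      (if i = y then (if x < i then ext c i x * cvec 6 (q i) (q x) a else 0) else 0) := by
    intro x y
    split_ifs <;> simp_all <;> (exfalso; omega)
  simp only [h2, Finset.sum_add_distrib]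
  rw [Finset.sum_comm]
  simp only [Finset.sum_ite_eq, Finset.mem_univ, if_true]
  rw [← Finset.sum_add_distrib, ← Finset.sum_erase_add _ _ (Finset.mem_univ i)]
  simp only [lt_irrefl, if_false, add_zero]
  apply Finset.sum_congr rfl
  intro j hj
  rcases lt_or_gt_of_ne (Finset.ne_of_mem_erase hj) with h | h
  · simp [h, h.not_gt]
  · simp [h, h.not_gt]

lemma stress_iff (q : Fin 9 → ℝ × ℝ) (c : Pair 9 → ℝ) :
    ∑ e, c e • cofRow 6 q e = 0 ↔ IsStress q (ext c) := by
  constructor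
  · intro h i a
    rw [← sum_rows, h]; rfl
  · intro h
    funext ⟨i, a⟩
    rw [sum_rows, h i a]; rfl

/-! ### The triangulation -/

lemma E5_cf : CrossingFree 9 3 E5 := by
  rintro ⟨C, hCE, hcard, hC⟩
  have hinj : Set.InjOn (fun e : Pair 9 => e.val.1) C := by
    intro e he f hf hef
    by_contra hne
    have := hC e he f hf hne
    simp only at hef
    unfold Cross at this
    rw [hef] at this
    simp at this
  have hc : (C.image (fun e : Pair 9 => e.val.1)).card = 4 := by
    rw [Finset.card_image_of_injOn hinj, hcard]
  let a := (C.image (fun e : Pair 9 => e.val.1)).orderEmbOfFin hc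
  have ha : ∀ i, ∃ e ∈ C, e.val.1 = a i := by
    intro i
    have := Finset.orderEmbOfFin_mem _ hc i
    simpa using Finset.mem_image.1 this
  choose e heC hea using ha
  have hcr : ∀ i j, i < j → (e i).val.1 < (e j).val.1 ∧ (e j).val.1 < (e i).val.2 ∧
      (e i).val.2 < (e j).val.2 := by
    intro i j hij
    have hlt : (e i).val.1 < (e j).val.1 := by
      rw [hea, hea]; exact a.strictMono hij
    rcases hC _ (heC i) _ (heC j) (fun h => by rw [h] at hlt; exact lt_irrefl _ hlt) with h | h
    · exact h
    · exact absurd h.1 hlt.not_gt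
  have hE : ∀ i, ¬ (((e i).val.1 : ℕ) = 0 ∧ ((e i).val.2 : ℕ) = 5) ∧
      ¬ (((e i).val.1 : ℕ) = 2 ∧ ((e i).val.2 : ℕ) = 6) ∧
      ¬ (((e i).val.1 : ℕ) = 3 ∧ ((e i).val.2 : ℕ) = 8) := by
    intro i
    obtain ⟨h1, h2, h3⟩ := hCE (heC i)
    refine ⟨fun h => h1 ?_, fun h => h2 ?_, fun h => h3 ?_⟩ <;>
    exact Prod.ext (Fin.ext h.1) (Fin.ext h.2)
  have c01 := hcr 0 1 (by decide)
  have c12 := hcr 1 2 (by decide)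
  have c23 := hcr 2 3 (by decide)
  have c03 := hcr 0 3 (by decide)
  have E0 := hE 0
  have E1 := hE 1
  have E2 := hE 2
  have E3 := hE 3
  have b := (e 3).val.2.isLt
  simp only [Fin.lt_def] at c01 c12 c23 c03
  omega

def mkP (i j : Fin 9) (h : i < j := by decide) : Pair 9 := ⟨(i, j), h⟩

lemma E5_add (S : Set (Pair 9)) (hS : CrossingFree 9 3 S) (hE : E5 ⊆ S)
    (C : Finset (Pair 9)) (e : Pair 9) (he : e ∈ S) (h4 : C.card = 4)
    (hx : ∀ x ∈ C, ∀ y ∈ C, x ≠ y → Cross x y)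
    (hC : ∀ x ∈ C, x = e ∨ x ∈ E5) : False := by
  apply hS
  refine ⟨C, fun x hx => ?_, h4, hx⟩
  rcases hC x hx with h | h
  · rw [h]; exact he
  · exact hE h

instance crossDec (e f : Pair 9) : Decidable (Cross e f) := by unfold Cross; infer_instance
instance e5Dec (e : Pair 9) : Decidable (e ∈ E5) := by
  unfold E5; exact inferInstanceAs (Decidable (_ ∧ _ ∧ _))

lemma E5_tri : IsTriangulation 9 3 E5 := by
  refine ⟨E5_cf, fun S hS hE => Set.Subset.antisymm (fun e he => ?_) hE⟩
  by_contra hne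
  have h : e = mkP 0 5 ∨ e = mkP 2 6 ∨ e = mkP 3 8 := by
    by_contra hcon
    push Not at hcon
    exact hne ⟨fun h => hcon.1 (Subtype.ext h), fun h => hcon.2.1 (Subtype.ext h),
      fun h => hcon.2.2 (Subtype.ext h)⟩
  rcases h with rfl | rfl | rfl
  · exact E5_add S hS hE {mkP 4 8, mkP 0 5, mkP 1 6, mkP 2 7} _ he (by decide) (by decide) (by decide)
  · exact E5_add S hS hE {mkP 1 5, mkP 2 6, mkP 3 7, mkP 4 8} _ he (by decide) (by decide) (by decide)
  · exact E5_add S hS hE {mkP 3 8, mkP 0 4, mkP 1 5, mkP 2 7} _ he (by decide) (by decide) (by decide)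

/-- If `q₁,…,q₉` are in convex position and the lines through `q₁q₆`, `q₃q₇`
and `q₄q₉` are concurrent, then `E = K₉ - {16,37,49}` is a 3-triangulation of the 9-gon and the
rows of `C₆(q)` indexed by `E` form a circuit. -/
theorem stmt5 (q : Fin 9 → ℝ × ℝ) (hq : ConvexPosition q)
    (hconc : ∃ p : ℝ × ℝ,
      onLine (q 0) (q 5) p ∧ onLine (q 2) (q 6) p ∧ onLine (q 3) (q 8) p) :
    IsTriangulation 9 3 E5 ∧
    ¬ LinearIndependent ℝ (fun e : E5 => cofRow 6 q e.val) ∧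
    ∀ S : Set (Pair 9), S ⊂ E5 →
      LinearIndependent ℝ (fun e : S => cofRow 6 q e.val) := by
  classical
  obtain ⟨p, hp1, hp2, hp3⟩ := hconc
  have h1 := onLine_brp q _ _ _ hp1
  have h2 := onLine_brp q _ _ _ hp2
  have h3 := onLine_brp q _ _ _ hp3
  refine ⟨E5_tri, ?_, ?_⟩
  · intro hli
    rw [Fintype.linearIndependent_iff] at hli
    have hst := stress_p q hq p
    let c : Pair 9 → ℝ := fun e => brp q e.val.1 e.val.2 p / den q e.val.1 e.val.2
    have hc : IsStress q (ext c) := by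
      intro i a
      rw [← hst i a]
      apply Finset.sum_congr rfl
      intro j hj
      congr 1
      rcases lt_or_gt_of_ne (Finset.ne_of_mem_erase hj) with h | h
      · simp only [ext, h, h.not_gt, dif_pos, dif_neg, not_false_eq_true, c]
        rw [brp_antisymm, den_antisymm q i j h.ne', neg_div_neg_eq]
      · simp only [ext, h, dif_pos, c]
    rw [← stress_iff] at hc
    have hz : ∀ e, e ∉ E5 → c e = 0 := by
      intro e he
      have h : e = mkP 0 5 ∨ e = mkP 2 6 ∨ e = mkP 3 8 := by
        by_contra hcon
        push Not at hcon
        exact he ⟨fun h => hcon.1 (Subtype.ext h), fun h => hcon.2.1 (Subtype.ext h),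
          fun h => hcon.2.2 (Subtype.ext h)⟩
      rcases h with rfl | rfl | rfl <;> simp [c, mkP, h1, h2, h3]
    have hsum : ∑ e : E5, c e.val • cofRow 6 q e.val = 0 := by
      rw [← hc, ← Finset.sum_subtype (Finset.univ.filter (fun e => e ∈ E5)) (by simp)
        (fun e => c e • cofRow 6 q e), Finset.sum_filter]
      apply Finset.sum_congr rfl
      intro e _
      split_ifs with h
      · rfl
      · rw [hz e h, zero_smul]
    have := hli (fun e => c e.val) hsum ⟨mkP 0 1, by decide⟩
    have hn := p_ne_all q hq p h1 h2 h3 0 1 (by decide) (by decide) (by decide) (by decide)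
    exact div_ne_zero hn (den_ne q hq 0 1 (by decide)) this
  · intro S hS
    obtain ⟨hSE, e, heE, heS⟩ := Set.ssubset_iff_exists.1 hS
    rw [Fintype.linearIndependent_iff]
    intro g hg f
    let c : Pair 9 → ℝ := fun e => if h : e ∈ S then g ⟨e, h⟩ else 0
    have hc : ∑ e, c e • cofRow 6 q e = 0 := by
      rw [← hg]
      have : ∀ f : S, g f • cofRow 6 q f.val = (fun e => c e • cofRow 6 q e) f.val := by
        intro f; simp [c]
      rw [Finset.sum_congr rfl (fun f _ => this f),
        ← Finset.sum_subtype (Finset.univ.filter (fun e => e ∈ S)) (by simp)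
        (fun e => c e • cofRow 6 q e), Finset.sum_filter]
      apply Finset.sum_congr rfl
      intro e _
      split_ifs with h
      · rfl
      · simp [c, h]
    rw [stress_iff] at hc
    have hz : ∀ e, e ∉ S → ext c e.val.1 e.val.2 = 0 := by
      intro e he; rw [ext_pair]; simp [c, he]
    have := stress_unique q hq p h1 h2 h3 (ext c) (ext_symm c) hc
      (hz (mkP 0 5) (fun h => absurd (hSE h) (by decide)))
      (hz (mkP 2 6) (fun h => absurd (hSE h) (by decide)))
      e.val.1 e.val.2 e.2 heE.1 heE.2.1 heE.2.2 (hz e heS) f.val.val.1 f.val.val.2 f.val.2.ne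
    rw [ext_pair] at this
    simpa [c] using this
end

section
/- Let k ≥ 1 and n ≥ 2k+1. Let B = {{i, n−k+i} : i = 1,…,k}, a set of pairs of {1,…,n+1} (each of length k+1 with respect to n+1, having n+1 on its short arc). Let S be any set of pairs of {1,…,n+1}, each of length at least k+1 with respect to n+1, with S ∩ B = ∅. Then S ∪ B is (k+1)-crossing-free if and only if the following three conditions hold: no pair of S contains the vertex n+1; every pair of S has length at least k+1 with respect to n (i.e., is k-relevant in the n-gon); and S is (k+1)-crossing-free. (Hence the reduced multiassociahedron of the n-gon equals the link of B in the reduced multiassociahedron of the (n+1)-gon.) -/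
open scoped BigOperators

/-- The set `B = {{i, n-k+i} : i = 1,…,k}` of pairs of `{1,…,n+1}` (0-indexed:
`{(j, n-k+j) : j = 0,…,k-1}`). -/
def Bset (n k : ℕ) : Set (Pair (n + 1)) :=
  {e | ∃ j : ℕ, j < k ∧ (e.val.1 : ℕ) = j ∧ (e.val.2 : ℕ) = n - k + j}

theorem Bset_union_crossingFree (k n : ℕ) (hn : 2 * k + 1 ≤ n)
    (S : Set (Pair (n + 1)))
    (h1 : ∀ e ∈ S, (e.val.1 : ℕ) ≠ n ∧ (e.val.2 : ℕ) ≠ n)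
    (h3 : CrossingFree (n + 1) k S) : CrossingFree (n + 1) k (S ∪ Bset n k) := by
  rintro ⟨C, hCS, hcard, hcr⟩
  by_cases hB : ∃ e ∈ C, e ∈ Bset n k
  · obtain ⟨e, heC, j, hj, he1, he2⟩ := hB
    have hlast : ∀ x ∈ C, (x.val.2 : ℕ) < n := by
      intro x hx
      rcases hCS hx with h | ⟨i, hi, hi1, hi2⟩
      · have := (h1 x h).2
        have := x.val.2.isLt
        omega
      · omega
    have key : ∀ x ∈ C, ((x.val.1 : ℕ) < j) ∨
        ((x.val.1 : ℕ) = j ∧ x = e) ∨ ((j < (x.val.1 : ℕ)) ∧ n - k + j < (x.val.2 : ℕ)) := by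
      intro x hx
      by_cases hxe : x = e
      · subst hxe; exact Or.inr (Or.inl ⟨he1, rfl⟩)
      · have := hcr x hx e heC hxe
        simp only [Cross, Fin.lt_def] at this
        omega
    have hle : C.card ≤ (Finset.range k).card := by
      apply Finset.card_le_card_of_injOn
        (fun x => if (x.val.1 : ℕ) ≤ j then (x.val.1 : ℕ) else (x.val.2 : ℕ) - (n - k))
      · intro x hx
        have h1 := hlast x hx
        have h2 := key x hx
        simp only [Finset.coe_range, Set.mem_Iio]
        split_ifs <;> omega
      · intro x hx y hy hxy
        by_contra hne
        have c := hcr x hx y hy hne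
        simp only [Cross, Fin.lt_def] at c
        have h2 := key x hx
        have h2' := key y hy
        dsimp only at hxy
        split_ifs at hxy <;> omega
    simp at hle
    omega
  · apply h3
    refine ⟨C, ?_, hcard, hcr⟩
    intro x hx
    rcases hCS hx with h | h
    · exact h
    · exact absurd ⟨x, hx, h⟩ hB

/-- The pairs of `B`, indexed. -/
def bPair (n k : ℕ) (hn : 2 * k + 1 ≤ n) (j : Fin k) : Pair (n + 1) :=
  ⟨(⟨j, by omega⟩, ⟨n - k + j, by omega⟩), by simp only [Fin.lt_def]; omega⟩

theorem no_last (k n : ℕ) (hn : 2 * k + 1 ≤ n) (S : Set (Pair (n + 1)))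
    (h : CrossingFree (n + 1) k (S ∪ Bset n k)) (e : Pair (n + 1)) (he : e ∈ S)
    (hl : k + 1 ≤ pairLen (n + 1) e) : (e.val.2 : ℕ) ≠ n := by
  classical
  intro hen
  simp only [pairLen] at hl
  have hinj : Function.Injective (bPair n k hn) := by
    intro a b hab
    have := congrArg (fun x : Pair (n + 1) => (x.val.1 : ℕ)) hab
    exact Fin.ext this
  have hnot : e ∉ Finset.univ.image (bPair n k hn) := by
    intro hm
    obtain ⟨j, -, rfl⟩ := Finset.mem_image.1 hm
    simp only [bPair] at hen
    omega
  apply h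
  refine ⟨insert e (Finset.univ.image (bPair n k hn)), ?_, ?_, ?_⟩
  · intro x hx
    simp only [Finset.coe_insert, Finset.coe_image, Set.mem_insert_iff] at hx
    rcases hx with rfl | ⟨j, -, rfl⟩
    · exact Or.inl he
    · exact Or.inr ⟨j, j.isLt, rfl, rfl⟩
  · rw [Finset.card_insert_of_notMem hnot, Finset.card_image_of_injective _ hinj]
    simp
  · intro x hx y hy hxy
    simp only [Finset.mem_insert, Finset.mem_image, Finset.mem_univ, true_and] at hx hy
    rcases hx with rfl | ⟨i, rfl⟩ <;> rcases hy with rfl | ⟨j, rfl⟩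
    · exact absurd rfl hxy
    · simp only [Cross, Fin.lt_def, bPair]
      omega
    · simp only [Cross, Fin.lt_def, bPair]
      omega
    · have hij : (i : ℕ) ≠ j := fun h => hxy (by rw [Fin.ext h])
      simp only [Cross, Fin.lt_def, bPair]
      omega

/-- For `k ≥ 1`, `n ≥ 2k+1`, and any set `S` of `k`-relevant pairs of the
`(n+1)`-gon disjoint from `B`, the union `S ∪ B` is `(k+1)`-crossing-free iff no pair of `S`
uses vertex `n+1`, every pair of `S` is `k`-relevant in the `n`-gon, and `S` is
`(k+1)`-crossing-free. -/
theorem stmt6 (k n : ℕ) (hk : 1 ≤ k) (hn : 2 * k + 1 ≤ n)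
    (S : Set (Pair (n + 1)))
    (hSrel : ∀ e ∈ S, k + 1 ≤ pairLen (n + 1) e)
    (hSB : S ∩ Bset n k = ∅) :
    CrossingFree (n + 1) k (S ∪ Bset n k) ↔
      ((∀ e ∈ S, (e.val.1 : ℕ) ≠ n ∧ (e.val.2 : ℕ) ≠ n) ∧
       (∀ e ∈ S, k + 1 ≤ pairLen n e) ∧
       CrossingFree (n + 1) k S) := by
  constructor
  · intro h
    have hl : ∀ e ∈ S, (e.val.2 : ℕ) ≠ n := fun e he => no_last k n hn S h e he (hSrel e he)
    refine ⟨fun e he => ⟨?_, hl e he⟩, fun e he => ?_, ?_⟩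
    · have h1 := e.property
      have h2 := e.val.2.isLt
      simp only [Fin.lt_def] at h1
      omega
    · by_contra hc
      have h1 := hSrel e he
      have h2 := hl e he
      have h3 := e.val.2.isLt
      simp only [pairLen] at h1 hc
      have : e ∈ S ∩ Bset n k := ⟨he, (e.val.1 : ℕ), by omega, rfl, by omega⟩
      rw [hSB] at this
      exact this
    · rintro ⟨C, hC, h2⟩
      exact h ⟨C, fun x hx => Or.inl (hC hx), h2⟩
  · rintro ⟨h1, -, h3⟩
    exact Bset_union_crossingFree k n hn S h1 h3
end

section
/- Let k ≥ 2 and n ≥ 2k+1. Let E = {{i, n+1} : k+1 ≤ i ≤ n−k}, the set of k-relevant pairs of the (n+1)-gon containing the vertex n+1, and let φ be the map sending a pair {i,j} with i<j to {i, j−1}. Then the map sending T to {φ(e) : e ∈ T, e ⊆ {1,…,n}, e is k-relevant in the (n+1)-gon} ∪ {pairs of {1,…,n−1} of length at most k−1 with respect to n−1} is a bijection from the set of k-triangulations of the (n+1)-gon containing E onto the set of (k−1)-triangulations of the (n−1)-gon. -/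
open scoped BigOperators

/-- The set `E = {{i, n+1} : k+1 ≤ i ≤ n-k}` of `k`-relevant pairs of the `(n+1)`-gon using the
vertex `n+1` (0-indexed: pairs `(i, n)` with `k ≤ i ≤ n-k-1`). -/
def Eset (n k : ℕ) : Set (Pair (n + 1)) :=
  {e | (e.val.2 : ℕ) = n ∧ k ≤ (e.val.1 : ℕ) ∧ (e.val.1 : ℕ) ≤ n - k - 1}

/-- The map sending `T` to the image under `φ({i,j}) = {i, j-1}` of its `k`-relevant pairs not
using vertex `n+1`, together with all pairs of length at most `k-1` in the `(n-1)`-gon. -/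
def flattenMap (n k : ℕ) (T : Set (Pair (n + 1))) : Set (Pair (n - 1)) :=
  {f | (∃ e ∈ T, (e.val.2 : ℕ) ≠ n ∧ k + 1 ≤ pairLen (n + 1) e ∧
          (f.val.1 : ℕ) = (e.val.1 : ℕ) ∧ (f.val.2 : ℕ) = (e.val.2 : ℕ) - 1) ∨
       pairLen (n - 1) f ≤ k - 1}

/-- A sorted crossing of size `K` inside `S`, with natural number endpoints. -/
def SCr {N : ℕ} (K : ℕ) (S : Set (Pair N)) (a b : ℕ → ℕ) : Prop :=
  (∀ m m', m < m' → m' < K → a m < a m' ∧ a m' < b m ∧ b m < b m') ∧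
  ∀ m, m < K → ∃ e ∈ S, (e.val.1 : ℕ) = a m ∧ (e.val.2 : ℕ) = b m

lemma cf_of_not_scr {N k : ℕ} {S : Set (Pair N)} (h : ∀ a b, ¬ SCr (k+1) S a b) :
    CrossingFree N k S := by
  rintro ⟨C, hCS, hcard, hC⟩
  have hinj : Set.InjOn (fun e : Pair N => (e.val.1 : ℕ)) C := by
    intro e he f hf hef
    by_contra hne
    have hef' : (e.val.1 : ℕ) = f.val.1 := hef
    rcases hC e he f hf hne with h | h
    · have := h.1
      rw [Fin.lt_def] at this; omega
    · have := h.1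
      rw [Fin.lt_def] at this; omega
  have hc : (C.image (fun e : Pair N => (e.val.1 : ℕ))).card = k + 1 := by
    rw [Finset.card_image_of_injOn hinj, hcard]
  set g := (C.image (fun e : Pair N => (e.val.1 : ℕ))).orderEmbOfFin hc with hg
  have hex : ∀ m : Fin (k+1), ∃ e ∈ C, (e.val.1 : ℕ) = g m := by
    intro m
    have := Finset.orderEmbOfFin_mem _ hc m
    simpa using Finset.mem_image.1 this
  choose e heC he1 using hex
  refine h (fun m => if hm : m < k+1 then (e ⟨m, hm⟩).val.1 else 0)
    (fun m => if hm : m < k+1 then (e ⟨m, hm⟩).val.2 else 0) ⟨?_, ?_⟩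
  · intro m m' hmm hm'
    have hm : m < k+1 := by omega
    simp only [hm, hm', dif_pos]
    have hlt : (g ⟨m, hm⟩ : ℕ) < g ⟨m', hm'⟩ := g.strictMono (by simpa using hmm)
    rw [← he1, ← he1] at hlt
    have hne : e ⟨m, hm⟩ ≠ e ⟨m', hm'⟩ := by
      intro h; rw [h] at hlt; omega
    rcases hC _ (heC _) _ (heC _) hne with h | h
    · simp only [Fin.lt_def] at h; omega
    · simp only [Fin.lt_def] at h; omega
  · intro m hm
    exact ⟨e ⟨m, hm⟩, hCS (heC _), by simp [hm], by simp [hm]⟩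

lemma not_scr_of_cf {N k : ℕ} {S : Set (Pair N)} (h : CrossingFree N k S) (a b : ℕ → ℕ) :
    ¬ SCr (k+1) S a b := by
  rintro ⟨h1, h2⟩
  have hex : ∀ m : Fin (k+1), ∃ e ∈ S, (e.val.1 : ℕ) = a m ∧ (e.val.2 : ℕ) = b m :=
    fun m => h2 m m.2
  choose e heS ha hb using hex
  have key : ∀ m m' : Fin (k+1), m < m' → Cross (e m) (e m') := by
    intro m m' hmm
    have := h1 m m' hmm m'.2
    left
    simp only [Fin.lt_def, ha, hb]
    exact this
  have hinj : Function.Injective e := by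
    intro m m' hmm
    rcases lt_trichotomy m m' with h | h | h
    · have := (h1 m m' h m'.2).1
      rw [← ha, ← ha, hmm] at this; omega
    · exact h
    · have := (h1 m' m h m.2).1
      rw [← ha, ← ha, hmm] at this; omega
  refine h ⟨Finset.univ.image e, ?_, ?_, ?_⟩
  · intro x hx
    simp only [Finset.coe_image, Finset.coe_univ, Set.image_univ, Set.mem_range] at hx
    obtain ⟨m, rfl⟩ := hx
    exact heS m
  · rw [Finset.card_image_of_injective _ hinj]; simp
  · intro x hx y hy hxy
    simp only [Finset.mem_image, Finset.mem_univ, true_and] at hx hy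
    obtain ⟨m, rfl⟩ := hx
    obtain ⟨m', rfl⟩ := hy
    rcases lt_trichotomy m m' with h | h | h
    · exact key _ _ h
    · exact absurd (congrArg e h) hxy
    · have := key _ _ h
      unfold Cross at this ⊢
      tauto

lemma mono_gap {K : ℕ} {f : ℕ → ℕ} (h : ∀ m m', m < m' → m' < K → f m < f m') (d i : ℕ)
    (hd : i + d < K) : f i + d ≤ f (i + d) := by
  induction d with
  | zero => simp
  | succ d ih =>
    have := ih (by omega)
    have := h (i+d) (i+(d+1)) (by omega) hd
    omega

lemma scr_bounds {N k : ℕ} {S : Set (Pair N)} {a b : ℕ → ℕ} (h : SCr (k+1) S a b) (m : ℕ)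
    (hm : m < k + 1) :
    m ≤ a m ∧ b m + (k - m) < N ∧ a m + (k + 1) ≤ b m ∧ b m - a m + (k+1) ≤ N := by
  obtain ⟨h1, h2⟩ := h
  have ha : ∀ m m', m < m' → m' < k+1 → a m < a m' := fun m m' h h' => (h1 m m' h h').1
  have hb : ∀ m m', m < m' → m' < k+1 → b m < b m' := fun m m' h h' => (h1 m m' h h').2.2
  have e1 := mono_gap ha m 0 (by omega)
  have e2 := mono_gap ha (k-m) m (by omega)
  have e3 := mono_gap hb m 0 (by omega)
  have e4 := mono_gap hb (k-m) m (by omega)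
  rw [show m + (k-m) = k by omega] at e2 e4
  simp only [zero_add] at e1 e3
  obtain ⟨e, -, -, he⟩ := h2 k (by omega)
  have := e.val.2.2
  have h0 : a k < b 0 := by
    rcases Nat.eq_zero_or_pos k with rfl | hk
    · obtain ⟨e, -, he1, he2⟩ := h2 0 (by omega)
      have := e.2
      rw [Fin.lt_def] at this; omega
    · exact (h1 0 k hk (by omega)).2.1
  omega

lemma scr_rel {N k : ℕ} {S : Set (Pair N)} {a b : ℕ → ℕ} (h : SCr (k+1) S a b) (m : ℕ)
    (hm : m < k + 1) (e : Pair N) (h1 : (e.val.1 : ℕ) = a m) (h2 : (e.val.2 : ℕ) = b m) :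
    k + 1 ≤ pairLen N e := by
  have := scr_bounds h m hm
  unfold pairLen
  omega

lemma irr_mem {N k : ℕ} {T : Set (Pair N)} (hT : IsTriangulation N k T) (e : Pair N)
    (he : pairLen N e ≤ k) : e ∈ T := by
  have : insert e T = T := by
    apply hT.2 _ _ (Set.subset_insert _ _)
    apply cf_of_not_scr
    intro a b hs
    refine not_scr_of_cf hT.1 a b ⟨hs.1, fun m hm => ?_⟩
    obtain ⟨f, hf, h1, h2⟩ := hs.2 m hm
    rcases hf with rfl | hf
    · have := scr_rel hs m hm f h1 h2
      omega
    · exact ⟨f, hf, h1, h2⟩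
  rw [← this]; exact Set.mem_insert _ _

/-- The inverse of the flattening map. -/
def unflat (n k : ℕ) (T : Set (Pair (n - 1))) : Set (Pair (n + 1)) :=
  {e | pairLen (n+1) e ≤ k ∨ e ∈ Eset n k ∨ (k + 1 ≤ pairLen (n + 1) e ∧
    ∃ f ∈ T, (e.val.2 : ℕ) ≠ n ∧ (f.val.1 : ℕ) = (e.val.1 : ℕ) ∧
      (f.val.2 : ℕ) = (e.val.2 : ℕ) - 1)}

lemma pair_ext {N : ℕ} {e f : Pair N} (h1 : (e.val.1 : ℕ) = f.val.1)
    (h2 : (e.val.2 : ℕ) = f.val.2) : e = f :=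
  Subtype.ext (Prod.ext (Fin.ext h1) (Fin.ext h2))

lemma flat_cf {n k : ℕ} (hk : 2 ≤ k) (hn : 2 * k + 1 ≤ n) {T : Set (Pair (n+1))}
    (hT : CrossingFree (n+1) k T) (hE : Eset n k ⊆ T) :
    CrossingFree (n-1) (k-1) (flattenMap n k T) := by
  apply cf_of_not_scr
  intro a b hs
  have B := scr_bounds hs
  have R := scr_rel hs
  rw [show k - 1 + 1 = k by omega] at B R
  obtain ⟨h1, h2⟩ := hs
  rw [show k - 1 + 1 = k by omega] at h1 h2
  refine not_scr_of_cf hT (fun m => if m < k then a m else b 0)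
    (fun m => if m < k then b m + 1 else n) ⟨?_, ?_⟩
  · intro m m' hmm hm'
    have hm : m < k := by omega
    have Bm := B m hm
    by_cases h : m' < k
    · have := h1 m m' hmm h
      simp only [hm, h, if_true]; omega
    · simp only [hm, h, if_true, if_false]
      have q1 : b 0 ≤ b m := by
        rcases Nat.eq_zero_or_pos m with rfl | h0
        · exact le_rfl
        · exact (h1 0 m h0 hm).2.2.le
      have q2 : a m < b 0 := by
        rcases Nat.eq_zero_or_pos m with rfl | h0
        · omega
        · exact (h1 0 m h0 hm).2.1
      omega
  · intro m hm'
    by_cases hm : m < k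
    · simp only [hm, if_true]
      obtain ⟨f, hf, f1, f2⟩ := h2 m hm
      have := R m hm f f1 f2
      rcases hf with ⟨e, he, he2, hl, g1, g2⟩ | hf
      · have := e.2
        rw [Fin.lt_def] at this
        exact ⟨e, he, by omega, by omega⟩
      · omega
    · simp only [hm, if_false]
      have B0 := B 0 (by omega)
      have Bk := B (k-1) (by omega)
      have q := (h1 0 (k-1) (by omega) (by omega)).2.1
      refine ⟨⟨(⟨b 0, by omega⟩, ⟨n, by omega⟩), by rw [Fin.lt_def]; simp only; omega⟩,
        hE ⟨rfl, ?_, ?_⟩, rfl, rfl⟩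
      · simp only; omega
      · simp only; omega

lemma unflat_cf {n k : ℕ} (hk : 2 ≤ k) (hn : 2 * k + 1 ≤ n) {T : Set (Pair (n-1))}
    (hT : CrossingFree (n-1) (k-1) T) : CrossingFree (n+1) k (unflat n k T) := by
  apply cf_of_not_scr
  intro a b hs
  have B := scr_bounds hs
  have R := scr_rel hs
  obtain ⟨h1, h2⟩ := hs
  refine not_scr_of_cf hT a (fun m => b m - 1) ⟨?_, ?_⟩
  · intro m m' hmm hm'
    have := h1 m m' hmm (by omega)
    have := h1 m k (by omega) (by omega)
    have := h1 m' k (by omega) (by omega)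
    simp only
    omega
  · intro m hm
    obtain ⟨e, he, e1, e2⟩ := h2 m (by omega)
    have := R m (by omega) e e1 e2
    have := B m (by omega)
    rcases he with he | he | ⟨-, f, hf, -, f1, f2⟩
    · omega
    · have := he.1
      omega
    · exact ⟨f, hf, by omega, by simp only; omega⟩

lemma unflat_flat {n k : ℕ} (hk : 2 ≤ k) (hn : 2 * k + 1 ≤ n) {T : Set (Pair (n+1))}
    (hI : ∀ e : Pair (n+1), pairLen (n+1) e ≤ k → e ∈ T) (hE : Eset n k ⊆ T) :
    unflat n k (flattenMap n k T) = T := by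
  ext e
  have he := e.2
  rw [Fin.lt_def] at he
  have he' := e.val.2.2
  constructor
  · rintro (h | h | ⟨hr, f, hf, h2, f1, f2⟩)
    · exact hI e h
    · exact hE h
    · rcases hf with ⟨e', he', q2, q, g1, g2⟩ | hf
      · have := e'.2
        rw [Fin.lt_def] at this
        rwa [pair_ext (e := e) (f := e') (by omega) (by omega)]
      · unfold pairLen at hf hr
        omega
  · intro h
    by_cases hr : pairLen (n+1) e ≤ k
    · exact Or.inl hr
    · by_cases h2 : (e.val.2 : ℕ) = n
      · right; left
        unfold pairLen at hr
        exact ⟨h2, by omega, by omega⟩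
      · right; right
        have hr' : k + 1 ≤ pairLen (n+1) e := by omega
        refine ⟨hr', ⟨(⟨e.val.1, ?_⟩, ⟨e.val.2 - 1, ?_⟩), ?_⟩,
          Or.inl ⟨e, h, h2, hr', rfl, rfl⟩, h2, rfl, rfl⟩
        all_goals unfold pairLen at hr'
        · omega
        · omega
        · rw [Fin.lt_def]; simp only; omega

lemma flat_unflat {n k : ℕ} (hk : 2 ≤ k) (hn : 2 * k + 1 ≤ n) {T : Set (Pair (n-1))}
    (hI : ∀ e : Pair (n-1), pairLen (n-1) e ≤ k-1 → e ∈ T) :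
    flattenMap n k (unflat n k T) = T := by
  ext f
  have hf := f.2
  rw [Fin.lt_def] at hf
  have hf' := f.val.2.2
  constructor
  · rintro (⟨e, he, h2, hr, g1, g2⟩ | h)
    · rcases he with he | he | ⟨-, f', hf', -, f1, f2⟩
      · omega
      · exact absurd he.1 h2
      · rwa [pair_ext (e := f) (f := f') (by omega) (by omega)]
    · exact hI f h
  · intro h
    by_cases hr : pairLen (n-1) f ≤ k-1
    · exact Or.inr hr
    · left
      let e : Pair (n+1) := ⟨(⟨f.val.1, by omega⟩, ⟨f.val.2 + 1, by omega⟩), by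
        rw [Fin.lt_def]; simp only; omega⟩
      have e1 : (e.val.1 : ℕ) = f.val.1 := rfl
      have e2 : (e.val.2 : ℕ) = f.val.2 + 1 := rfl
      have hl : k + 1 ≤ pairLen (n+1) e := by
        unfold pairLen at hr ⊢
        omega
      exact ⟨e, Or.inr (Or.inr ⟨hl, f, h, by omega, by omega, by omega⟩), by omega, hl,
        by omega, by omega⟩

lemma flat_mono {n k : ℕ} {S T : Set (Pair (n+1))} (h : S ⊆ T) :
    flattenMap n k S ⊆ flattenMap n k T := by
  rintro f (⟨e, he, q⟩ | hf)
  · exact Or.inl ⟨e, h he, q⟩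
  · exact Or.inr hf

lemma unflat_mono {n k : ℕ} {S T : Set (Pair (n-1))} (h : S ⊆ T) :
    unflat n k S ⊆ unflat n k T := by
  rintro e (he | he | ⟨hr, f, hf, q⟩)
  · exact Or.inl he
  · exact Or.inr (Or.inl he)
  · exact Or.inr (Or.inr ⟨hr, f, h hf, q⟩)

/-- For `k ≥ 2` and `n ≥ 2k+1`, flattening is a bijection from the
`k`-triangulations of the `(n+1)`-gon containing `E` onto the `(k-1)`-triangulations of the
`(n-1)`-gon. -/
theorem stmt7 (k n : ℕ) (hk : 2 ≤ k) (hn : 2 * k + 1 ≤ n) :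
    Set.BijOn (flattenMap n k)
      {T : Set (Pair (n + 1)) | IsTriangulation (n + 1) k T ∧ Eset n k ⊆ T}
      {T' : Set (Pair (n - 1)) | IsTriangulation (n - 1) (k - 1) T'} := by
  refine ⟨?_, ?_, ?_⟩
  · rintro T ⟨hT, hE⟩
    refine ⟨flat_cf hk hn hT.1 hE, fun S hS hTS => ?_⟩
    have h1 := unflat_mono (k := k) hTS
    rw [unflat_flat hk hn (irr_mem hT) hE] at h1
    have h2 := hT.2 _ (unflat_cf hk hn hS) h1
    rw [← h2, flat_unflat hk hn]
    exact fun e he => hTS (Or.inr he)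
  · rintro T ⟨hT, hE⟩ S ⟨hS, hE'⟩ h
    rw [← unflat_flat hk hn (irr_mem hT) hE, h, unflat_flat hk hn (irr_mem hS) hE']
  · intro T hT
    have hT : IsTriangulation (n-1) (k-1) T := hT
    have hFG := flat_unflat hk hn (irr_mem hT)
    refine ⟨unflat n k T, ⟨⟨unflat_cf hk hn hT.1, fun S hS hTS => ?_⟩,
      fun e he => Or.inr (Or.inl he)⟩, hFG⟩
    have hE : Eset n k ⊆ S := fun e he => hTS (Or.inr (Or.inl he))
    have h1 := flat_mono (k := k) hTS
    rw [hFG] at h1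
    have h2 := hT.2 _ (flat_cf hk hn hS hE) h1
    rw [← h2, unflat_flat hk hn (fun e he => hTS (Or.inl he)) hE]
end
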